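/- arXiv:1504.04396 — 3 statements merged into one kernel-verified Lean document; each statement's English description precedes it below -/
import Mathlib

section
/- Let λ be a positive irrational real number with λ ≥ 3. Then there exists a C-linear map L : A → C² such that, writing L(I(q)) = (F₀(q), F₁(q)) for q > 0, for each k ∈ {0,1} and each integer M ≥ 0 there exist constants K_M, q_M with: for all real q ≥ q_M, | F_k(q) − Σ_{m=0}^{M−1} [∏_{l=0}^{m−1}(−λ−(k/2+l))³/(2m+k)!] · q^{−m−k/2−λ} | ≤ K_M · q^{−M−k/2−λ}. That is, L·I^{Tot(O_{P²}(−2))}(q, z=1) admits the power series asymptotic expansion I^{[C³/Z₂]}(t = q^{−1/2}, z = 1) = Σ_{k=0,1} Σ_{m≥0} q^{−m−k/2−λ} [∏_{l=0}^{m−1}(−λ−(k/2+l))³/(2m+k)!] · 1_k as q → +∞. -/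
/-!
In the variable `x = log q` the `I`-function of `Tot(O_{ℙ²}(-2))`, together with its first two
derivatives, solves a third-order linear system with values in `A`. As `x → -∞` its three entries,
divided by `exp (x H)`, tend to the basis `1, H, H²`, so by uniqueness for the system every scalar
solution is the image of the `I`-function under a linear functional.

The functionals come from the transform `K f (τ) = ∫₀^∞ e^{-s} s^{lam - 1} f(τ√s) ds`. It commutes
with the Euler operator `θ = lam + (τ/2) d/dτ`, and integration by parts shows that the transform
with `lam + 1` in place of `lam` is `θ K`. Hence `f'' = -f` gives `θ³ K³ f = -(K³ f)''`, and for
`τ = q^{-1/2}` this says exactly that `q^{-lam} K³ f(τ)` solves the system above. By Watson's lemma,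
applied three times, `K³` multiplies the Taylor coefficient of `τⁿ` by `Γ(lam + n/2)³`; the cosine
and the sine, after division by `Γ(lam + k/2)³`, give the two components of the `I`-function of
`[ℂ³/ℤ₂]`.
-/

namespace IFunction

open Complex Filter Topology MeasureTheory Set
open scoped Real Matrix

noncomputable section

section GammaTransform

variable {E : Type*} [NormedAddCommGroup E] [NormedSpace ℂ E] {lam mu : ℂ} {f : ℝ → E} {C : ℝ}

/-- The integrand `e^{-s} s^{lam - 1}` of Euler's integral for `Γ(lam)`. -/
def gammaWeight (lam : ℂ) (s : ℝ) : ℂ := (Real.exp (-s) : ℂ) * (s : ℂ) ^ (lam - 1)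

/-- The transform `f ↦ ∫₀^∞ e^{-s} s^{lam - 1} f(τ√s) ds`, which multiplies `τⁿ` by `Γ(lam + n/2)`.
Three applications turn the cosine and sine series into the two components of the `I`-function of
`[ℂ³/ℤ₂]`. -/
def gammaTransform (lam : ℂ) (f : ℝ → E) (τ : ℝ) : E :=
  ∫ s in Ioi (0 : ℝ), gammaWeight lam s • f (τ * √s)

lemma integrableOn_gammaWeight (hlam : 0 < lam.re) : IntegrableOn (gammaWeight lam) (Ioi 0) :=
  GammaIntegral_convergent hlam

lemma integral_gammaWeight (hlam : 0 < lam.re) :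
    ∫ s in Ioi (0 : ℝ), gammaWeight lam s = Gamma lam :=
  (Gamma_eq_integral hlam).symm

lemma norm_gammaWeight (lam : ℂ) {s : ℝ} (hs : 0 < s) :
    ‖gammaWeight lam s‖ = Real.exp (-s) * s ^ (lam.re - 1) := by
  rw [gammaWeight, norm_mul, norm_real, Real.norm_of_nonneg (Real.exp_pos _).le,
    norm_cpow_eq_rpow_re_of_pos hs, sub_re, one_re]

lemma integral_norm_gammaWeight (hlam : 0 < lam.re) :
    ∫ s in Ioi (0 : ℝ), ‖gammaWeight lam s‖ = Real.Gamma lam.re := by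
  rw [Real.Gamma_eq_integral hlam]
  exact setIntegral_congr_fun measurableSet_Ioi fun s hs => norm_gammaWeight lam hs

lemma gammaWeight_add_natCast_div_two (lam : ℂ) (n : ℕ) {s : ℝ} (hs : 0 < s) :
    gammaWeight (lam + n / 2) s = gammaWeight lam s * (√s : ℂ) ^ n := by
  have hsqrt : (√s : ℂ) ^ n = (s : ℂ) ^ ((n : ℂ) / 2) := by
    rw [Real.sqrt_eq_rpow, ofReal_cpow hs.le, ← cpow_nat_mul]
    push_cast
    ring_nf
  rw [gammaWeight, gammaWeight, hsqrt, mul_assoc, ← cpow_add _ _ (ofReal_ne_zero.2 hs.ne')]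
  ring_nf

lemma gammaWeight_add_half (lam : ℂ) {s : ℝ} (hs : 0 < s) :
    gammaWeight (lam + 1 / 2) s = gammaWeight lam s * (√s : ℂ) := by
  simpa using gammaWeight_add_natCast_div_two lam 1 hs

lemma re_add_half_pos (hlam : 0 < lam.re) : 0 < (lam + 1 / 2).re := by
  simp only [add_re, one_re, div_ofNat_re]; linarith

lemma re_add_one_pos (hlam : 0 < lam.re) : 0 < (lam + 1).re := by
  simp only [add_re, one_re]; linarith

lemma integrableOn_gammaWeight_smul (hlam : 0 < lam.re) (hf : Continuous f)
    (hC : ∀ x, ‖f x‖ ≤ C) (τ : ℝ) :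
    IntegrableOn (fun s => gammaWeight lam s • f (τ * √s)) (Ioi 0) :=
  (integrableOn_gammaWeight hlam).smul_bdd C (by fun_prop) (ae_of_all _ fun _ => hC _)

lemma norm_gammaTransform_le (hlam : 0 < lam.re) (hC : ∀ x, ‖f x‖ ≤ C) (τ : ℝ) :
    ‖gammaTransform lam f τ‖ ≤ Real.Gamma lam.re * C := by
  rw [← integral_norm_gammaWeight hlam, ← integral_mul_const]
  refine norm_integral_le_of_norm_le ((integrableOn_gammaWeight hlam).norm.mul_const C)
    (ae_of_all _ fun s => ?_)
  rw [norm_smul]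
  gcongr
  exact hC _

lemma continuous_gammaTransform (hlam : 0 < lam.re) (hf : Continuous f)
    (hC : ∀ x, ‖f x‖ ≤ C) : Continuous (gammaTransform lam f) := by
  refine continuous_of_dominated
    (fun τ => (integrableOn_gammaWeight_smul hlam hf hC τ).aestronglyMeasurable)
    (fun τ => ae_of_all _ fun s => ?_) ((integrableOn_gammaWeight hlam).norm.mul_const C)
    (ae_of_all _ fun s => by fun_prop)
  rw [norm_smul]
  gcongr
  exact hC _

/-- Bounded `C¹` functions on the line with bounded derivative, a class preserved by
`gammaTransform lam` for `0 < re lam`. -/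
structure IsBoundedC1 (f : ℝ → E) : Prop where
  differentiable : Differentiable ℝ f
  continuous_deriv : Continuous (deriv f)
  bounded : ∃ C, ∀ x, ‖f x‖ ≤ C
  bounded_deriv : ∃ C, ∀ x, ‖deriv f x‖ ≤ C

lemma IsBoundedC1.continuous (hf : IsBoundedC1 f) : Continuous f := hf.differentiable.continuous

lemma IsBoundedC1.integrableOn_smul (hf : IsBoundedC1 f) (hlam : 0 < lam.re) (τ : ℝ) :
    IntegrableOn (fun s => gammaWeight lam s • f (τ * √s)) (Ioi 0) :=
  hf.bounded.elim fun _ hC => integrableOn_gammaWeight_smul hlam hf.continuous hC τ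

lemma IsBoundedC1.integrableOn_smul_deriv (hf : IsBoundedC1 f) (hlam : 0 < lam.re)
    (τ : ℝ) : IntegrableOn (fun s => gammaWeight lam s • deriv f (τ * √s)) (Ioi 0) :=
  hf.bounded_deriv.elim fun _ hC =>
    integrableOn_gammaWeight_smul hlam hf.continuous_deriv hC τ

lemma hasDerivAt_gammaTransform (hf : IsBoundedC1 f) (hlam : 0 < lam.re) (τ : ℝ) :
    HasDerivAt (gammaTransform lam f) (gammaTransform (lam + 1 / 2) (deriv f) τ) τ := by
  obtain ⟨C, hC⟩ := hf.bounded_deriv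
  have hlam' := re_add_half_pos hlam
  refine (hasDerivAt_integral_of_dominated_loc_of_deriv_le
    (bound := fun s => ‖gammaWeight (lam + 1 / 2) s‖ * C) univ_mem
    (Eventually.of_forall fun t => (hf.integrableOn_smul hlam t).aestronglyMeasurable)
    (hf.integrableOn_smul hlam τ)
    (F' := fun t s => gammaWeight (lam + 1 / 2) s • deriv f (t * √s))
    (hf.integrableOn_smul_deriv hlam' τ).aestronglyMeasurable
    (ae_of_all _ fun s t _ => ?_) ((integrableOn_gammaWeight hlam').norm.mul_const C)
    ((ae_restrict_mem measurableSet_Ioi).mono fun s hs t _ => ?_)).2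
  · rw [norm_smul]
    gcongr
    exact hC _
  · have hchain : HasDerivAt (fun t => f (t * √s)) (√s • deriv f (t * √s)) t :=
      (hf.differentiable _).hasDerivAt.scomp t (hasDerivAt_mul_const √s)
    refine (hchain.const_smul (gammaWeight lam s)).congr_deriv ?_
    rw [gammaWeight_add_half lam hs, mul_smul, coe_smul]

lemma deriv_gammaTransform (hf : IsBoundedC1 f) (hlam : 0 < lam.re) :
    deriv (gammaTransform lam f) = gammaTransform (lam + 1 / 2) (deriv f) :=
  funext fun τ => (hasDerivAt_gammaTransform hf hlam τ).deriv

lemma isBoundedC1_gammaTransform (hf : IsBoundedC1 f) (hlam : 0 < lam.re) :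
    IsBoundedC1 (gammaTransform lam f) := by
  obtain ⟨C, hC⟩ := hf.bounded
  obtain ⟨C', hC'⟩ := hf.bounded_deriv
  have hlam' := re_add_half_pos hlam
  refine ⟨fun τ => (hasDerivAt_gammaTransform hf hlam τ).differentiableAt, ?_,
    ⟨_, norm_gammaTransform_le hlam hC⟩, ?_⟩ <;> rw [deriv_gammaTransform hf hlam]
  · exact continuous_gammaTransform hlam' hf.continuous_deriv hC'
  · exact ⟨_, norm_gammaTransform_le hlam' hC'⟩

/-- The operator `lam + (τ/2) d/dτ`. On functions `q^{-lam} f(q^{-1/2})` it represents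
`-q d/dq`. -/
def eulerOp (lam : ℂ) (f : ℝ → E) (τ : ℝ) : E := lam • f τ + ((τ : ℂ) / 2) • deriv f τ

lemma gammaTransform_eulerOp (hf : IsBoundedC1 f) (hmu : 0 < mu.re) :
    gammaTransform mu (eulerOp lam f) = eulerOp lam (gammaTransform mu f) := by
  funext τ
  have hint : IntegrableOn (fun s => lam • gammaWeight mu s • f (τ * √s)) (Ioi 0) :=
    (hf.integrableOn_smul hmu τ).smul lam
  have hint' : IntegrableOn
      (fun s => ((τ : ℂ) / 2) • gammaWeight (mu + 1 / 2) s • deriv f (τ * √s)) (Ioi 0) :=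
    (hf.integrableOn_smul_deriv (re_add_half_pos hmu) τ).smul ((τ : ℂ) / 2)
  rw [eulerOp, deriv_gammaTransform hf hmu, gammaTransform, gammaTransform, gammaTransform,
    ← integral_smul, ← integral_smul, ← integral_add hint hint']
  refine setIntegral_congr_fun measurableSet_Ioi fun s hs => ?_
  simp only [eulerOp, gammaWeight_add_half mu hs, ofReal_mul]
  module

lemma hasDerivAt_gammaWeight_add_one (hlam : lam ≠ 0) {s : ℝ} (hs : 0 < s) :
    HasDerivAt (gammaWeight (lam + 1)) (lam * gammaWeight lam s - gammaWeight (lam + 1) s) s := by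
  have hexp : HasDerivAt (fun s : ℝ => (Real.exp (-s) : ℂ)) (-(Real.exp (-s) : ℂ)) s := by
    simpa using (hasDerivAt_neg s).exp.ofReal_comp
  refine ((hexp.mul (hasDerivAt_ofReal_cpow_const hs.ne' hlam)).congr_of_eventuallyEq
    (Eventually.of_forall fun t => ?_)).congr_deriv ?_
  · simp [gammaWeight]
  · simp only [gammaWeight, add_sub_cancel_right]
    ring

lemma hasDerivAt_gammaWeight_smul (hf : Differentiable ℝ f) (hlam : lam ≠ 0) (τ : ℝ) {s : ℝ}
    (hs : 0 < s) :
    HasDerivAt (fun s => gammaWeight (lam + 1) s • f (τ * √s))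
      (lam • gammaWeight lam s • f (τ * √s)
        + ((τ : ℂ) / 2) • gammaWeight (lam + 1 / 2) s • deriv f (τ * √s)
        - gammaWeight (lam + 1) s • f (τ * √s)) s := by
  have hchain := (hf _).hasDerivAt.scomp s ((Real.hasDerivAt_sqrt hs.ne').const_mul τ)
  have hhalf : gammaWeight (lam + 1) s = gammaWeight (lam + 1 / 2) s * (√s : ℂ) := by
    rw [← gammaWeight_add_half _ hs]
    ring_nf
  have hsqrt : gammaWeight (lam + 1) s * (τ * (1 / (2 * √s)) : ℝ)
      = (τ : ℂ) / 2 * gammaWeight (lam + 1 / 2) s := by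
    have hne : (√s : ℂ) ≠ 0 := ofReal_ne_zero.2 (Real.sqrt_pos.2 hs).ne'
    rw [hhalf]
    push_cast
    field_simp
  refine ((hasDerivAt_gammaWeight_add_one hlam hs).smul hchain).congr_deriv ?_
  rw [← coe_smul, smul_smul, hsqrt, Function.comp_apply]
  module

/-- Integration by parts against `d(e^{-s} s^lam)`. -/
lemma gammaTransform_add_one [CompleteSpace E] (hf : IsBoundedC1 f) (hlam : 0 < lam.re) :
    gammaTransform (lam + 1) f = eulerOp lam (gammaTransform lam f) := by
  funext τ
  have hlam0 : lam ≠ 0 := by rintro rfl; simp at hlam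
  have hint : IntegrableOn (fun s => lam • gammaWeight lam s • f (τ * √s)) (Ioi 0) :=
    (hf.integrableOn_smul hlam τ).smul lam
  have hint_half : IntegrableOn
      (fun s => ((τ : ℂ) / 2) • gammaWeight (lam + 1 / 2) s • deriv f (τ * √s)) (Ioi 0) :=
    (hf.integrableOn_smul_deriv (re_add_half_pos hlam) τ).smul ((τ : ℂ) / 2)
  have hint_one := hf.integrableOn_smul (re_add_one_pos hlam) τ
  have hderiv := fun (s : ℝ) (hs : s ∈ Ioi 0) =>
    hasDerivAt_gammaWeight_smul hf.differentiable hlam0 τ (mem_Ioi.1 hs)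
  have hint_sum : IntegrableOn (fun s => lam • gammaWeight lam s • f (τ * √s) +
      ((τ : ℂ) / 2) • gammaWeight (lam + 1 / 2) s • deriv f (τ * √s)) (Ioi 0) :=
    hint.add hint_half
  have hcont : Continuous fun s => gammaWeight (lam + 1) s • f (τ * √s) := by
    have hpow := continuous_ofReal_cpow_const hlam
    have hfc := hf.continuous
    simp only [gammaWeight, add_sub_cancel_right]
    fun_prop
  have hparts := integral_Ioi_of_hasDerivAt_of_tendsto hcont.continuousWithinAt hderiv
    (hint_sum.sub hint_one)
    (tendsto_zero_of_hasDerivAt_of_integrableOn_Ioi hderiv (hint_sum.sub hint_one) hint_one)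
  have hzero : gammaWeight (lam + 1) 0 = 0 := by simp [gammaWeight, hlam0]
  rw [hzero, zero_smul, sub_zero, integral_sub hint_sum hint_one,
    integral_add hint hint_half, integral_smul, integral_smul, sub_eq_zero] at hparts
  rw [eulerOp, deriv_gammaTransform hf hlam]
  exact hparts.symm

end GammaTransform

section Iterate

variable {E : Type*} [NormedAddCommGroup E] [NormedSpace ℂ E] {lam mu : ℂ} {f : ℝ → E}

lemma isBoundedC1_gammaTransform_iterate (hlam : 0 < lam.re) (n : ℕ) (hf : IsBoundedC1 f) :
    IsBoundedC1 ((gammaTransform lam)^[n] f) := by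
  induction n generalizing f with
  | zero => exact hf
  | succ _ ih => exact ih (isBoundedC1_gammaTransform hf hlam)

lemma gammaTransform_neg (lam : ℂ) (f : ℝ → E) :
    gammaTransform lam (-f) = -gammaTransform lam f := by
  funext τ
  simp only [gammaTransform, Pi.neg_apply, smul_neg, integral_neg]

lemma deriv_gammaTransform_iterate (hlam : 0 < lam.re) (n : ℕ) (hf : IsBoundedC1 f) :
    deriv ((gammaTransform lam)^[n] f) = (gammaTransform (lam + 1 / 2))^[n] (deriv f) := by
  induction n generalizing f with
  | zero => rfl
  | succ n ih =>
    rw [Function.iterate_succ_apply, Function.iterate_succ_apply,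
      ih (isBoundedC1_gammaTransform hf hlam), deriv_gammaTransform hf hlam]

lemma gammaTransform_iterate_eulerOp (hmu : 0 < mu.re) (n : ℕ) (hf : IsBoundedC1 f) :
    (gammaTransform mu)^[n] (eulerOp lam f) = eulerOp lam ((gammaTransform mu)^[n] f) := by
  induction n generalizing f with
  | zero => rfl
  | succ n ih =>
    rw [Function.iterate_succ_apply, Function.iterate_succ_apply, gammaTransform_eulerOp hf hmu,
      ih (isBoundedC1_gammaTransform hf hmu)]

lemma gammaTransform_add_one_iterate [CompleteSpace E] (hlam : 0 < lam.re) (n : ℕ)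
    (hf : IsBoundedC1 f) :
    (gammaTransform (lam + 1))^[n] f = (eulerOp lam)^[n] ((gammaTransform lam)^[n] f) := by
  induction n generalizing f with
  | zero => rfl
  | succ n ih =>
    have hK := isBoundedC1_gammaTransform hf hlam
    rw [Function.iterate_succ_apply, ih (isBoundedC1_gammaTransform hf (re_add_one_pos hlam)),
      gammaTransform_add_one hf hlam, gammaTransform_iterate_eulerOp hlam n hK,
      ← Function.iterate_succ_apply, ← Function.iterate_succ_apply]

lemma deriv_deriv_gammaTransform_iterate (hlam : 0 < lam.re) (n : ℕ) (hf : IsBoundedC1 f)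
    (hf' : IsBoundedC1 (deriv f)) :
    deriv (deriv ((gammaTransform lam)^[n] f)) =
      (gammaTransform (lam + 1))^[n] (deriv (deriv f)) := by
  rw [deriv_gammaTransform_iterate hlam n hf,
    deriv_gammaTransform_iterate (re_add_half_pos hlam) n hf', add_assoc, add_halves]

lemma eulerOp_iterate_gammaTransform_iterate [CompleteSpace E] (hlam : 0 < lam.re) (n : ℕ)
    (hf : IsBoundedC1 f) (hf' : IsBoundedC1 (deriv f)) (hosc : deriv (deriv f) = -f) :
    (eulerOp lam)^[n] ((gammaTransform lam)^[n] f) =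
      -deriv (deriv ((gammaTransform lam)^[n] f)) := by
  have hneg : Function.Commute (gammaTransform (E := E) (lam + 1)) Neg.neg :=
    gammaTransform_neg (lam + 1)
  rw [deriv_deriv_gammaTransform_iterate hlam n hf hf', hosc, hneg.iterate_left n f, neg_neg,
    gammaTransform_add_one_iterate hlam n hf]

end Iterate

section Expansion

variable {E : Type*} [NormedAddCommGroup E] [NormedSpace ℂ E] {lam : ℂ} {f : ℝ → E} {p : ℕ → ℕ}
  {a : ℕ → E}

/-- `∑ x ^ p m • a m` is an asymptotic expansion of `f` at `0⁺`, with remainders bounded by the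
first omitted power on the whole half-line `x ≥ 0`. -/
def HasExpansion (f : ℝ → E) (p : ℕ → ℕ) (a : ℕ → E) : Prop :=
  ∀ M, ∃ C, ∀ x : ℝ, 0 ≤ x → ‖f x - ∑ m ∈ Finset.range M, (x : ℂ) ^ p m • a m‖ ≤ C * x ^ p M

lemma HasExpansion.const_smul (h : HasExpansion f p a) (c : ℂ) :
    HasExpansion (c • f) p (c • a) := by
  intro M
  obtain ⟨C, hC⟩ := h M
  refine ⟨‖c‖ * C, fun x hx => ?_⟩
  simp only [Pi.smul_apply, smul_comm _ c, ← Finset.smul_sum, ← smul_sub, norm_smul, mul_assoc]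
  exact mul_le_mul_of_nonneg_left (hC x hx) (norm_nonneg c)

lemma re_add_natCast_div_two_pos (hlam : 0 < lam.re) (n : ℕ) : 0 < (lam + n / 2).re := by
  simp only [add_re, div_ofNat_re, natCast_re]
  positivity

lemma gammaWeight_smul_monomial (lam : ℂ) (n : ℕ) (c : E) (τ : ℝ) {s : ℝ} (hs : 0 < s) :
    gammaWeight lam s • ((τ * √s : ℝ) : ℂ) ^ n • c =
      gammaWeight (lam + n / 2) s • (τ : ℂ) ^ n • c := by
  rw [gammaWeight_add_natCast_div_two lam n hs, ofReal_mul, mul_pow]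
  module

lemma integrableOn_gammaWeight_smul_monomial (hlam : 0 < lam.re) (n : ℕ) (c : E) (τ : ℝ) :
    IntegrableOn (fun s => gammaWeight lam s • ((τ * √s : ℝ) : ℂ) ^ n • c) (Ioi 0) :=
  (integrableOn_congr_fun (fun _ hs => gammaWeight_smul_monomial lam n c τ hs)
    measurableSet_Ioi).2
    ((integrableOn_gammaWeight (re_add_natCast_div_two_pos hlam n)).smul_const _)

lemma gammaTransform_monomial [CompleteSpace E] (hlam : 0 < lam.re) (n : ℕ) (c : E) (τ : ℝ) :
    gammaTransform lam (fun x => (x : ℂ) ^ n • c) τ = (τ : ℂ) ^ n • Gamma (lam + n / 2) • c := by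
  rw [gammaTransform, setIntegral_congr_fun measurableSet_Ioi
      fun s hs => gammaWeight_smul_monomial lam n c τ hs,
    integral_smul_const, integral_gammaWeight (re_add_natCast_div_two_pos hlam n), smul_comm]

/-- Watson's lemma. -/
lemma HasExpansion.gammaTransform [CompleteSpace E] (h : HasExpansion f p a) (hlam : 0 < lam.re)
    (hf : IsBoundedC1 f) :
    HasExpansion (gammaTransform lam f) p fun m => Gamma (lam + p m / 2) • a m := by
  intro M
  obtain ⟨C, hC⟩ := h M
  have hM := re_add_natCast_div_two_pos hlam (p M)
  have hmono := fun m τ => integrableOn_gammaWeight_smul_monomial hlam (p m) (a m) τ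
  refine ⟨Real.Gamma (lam + p M / 2).re * C, fun τ hτ => ?_⟩
  have hrem : IFunction.gammaTransform lam f τ
        - ∑ m ∈ Finset.range M, (τ : ℂ) ^ p m • Gamma (lam + p m / 2) • a m =
      ∫ s in Ioi (0 : ℝ), gammaWeight lam s •
        (f (τ * √s) - ∑ m ∈ Finset.range M, ((τ * √s : ℝ) : ℂ) ^ p m • a m) := by
    simp only [smul_sub, Finset.smul_sum, ← gammaTransform_monomial hlam]
    rw [integral_sub (hf.integrableOn_smul hlam τ) (integrable_finsetSum _ fun m _ => hmono m τ),
      integral_finsetSum _ fun m _ => hmono m τ]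
    rfl
  rw [hrem, mul_assoc, ← integral_norm_gammaWeight hM, ← integral_mul_const]
  refine norm_integral_le_of_norm_le ((integrableOn_gammaWeight hM).norm.mul_const _)
    ((ae_restrict_mem measurableSet_Ioi).mono fun s hs => ?_)
  calc _ ≤ ‖gammaWeight lam s‖ * (C * (τ * √s) ^ p M) := by
        rw [norm_smul]
        gcongr
        exact hC _ (by positivity)
    _ = ‖gammaWeight (lam + p M / 2) s‖ * (C * τ ^ p M) := by
        rw [gammaWeight_add_natCast_div_two lam _ hs, norm_mul, norm_pow, norm_real,
          Real.norm_of_nonneg (Real.sqrt_nonneg s)]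
        ring

lemma HasExpansion.gammaTransform_iterate [CompleteSpace E] (h : HasExpansion f p a)
    (hlam : 0 < lam.re) (hf : IsBoundedC1 f) (n : ℕ) :
    HasExpansion ((IFunction.gammaTransform lam)^[n] f) p
      fun m => Gamma (lam + p m / 2) ^ n • a m := by
  induction n with
  | zero => simpa using h
  | succ n ih =>
    rw [Function.iterate_succ_apply']
    simpa only [smul_smul, ← pow_succ'] using
      ih.gammaTransform hlam (isBoundedC1_gammaTransform_iterate hlam n hf)

end Expansion

section ShiftedCosine

lemma abs_sub_sum_le_of_hasDerivAt {f f' : ℝ → ℝ} {p : ℕ → ℕ} {b : ℕ → ℝ} {M N : ℕ} {C : ℝ}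
    (hf : ∀ x, HasDerivAt f (f' x) x) (hC : 0 ≤ C)
    (h : ∀ x, 0 ≤ x → |f' x - ∑ m ∈ Finset.range M, b m * x ^ p m| ≤ C * x ^ N) {x : ℝ}
    (hx : 0 ≤ x) :
    |f x - f 0 - ∑ m ∈ Finset.range M, b m / (p m + 1 : ℕ) * x ^ (p m + 1)| ≤ C * x ^ (N + 1) := by
  have hderiv : ∀ y, HasDerivAt
      (fun y => f y - f 0 - ∑ m ∈ Finset.range M, b m / (p m + 1 : ℕ) * y ^ (p m + 1))
      (f' y - ∑ m ∈ Finset.range M, b m * y ^ p m) y := by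
    intro y
    refine ((hf y).sub_const _).sub (HasDerivAt.fun_sum fun m _ => ?_)
    refine ((hasDerivAt_pow (p m + 1) y).const_mul _).congr_deriv ?_
    field_simp
    rw [Nat.add_sub_cancel]
  have hbound := norm_image_sub_le_of_norm_deriv_le_segment' (a := 0) (b := x) (C := C * x ^ N)
    (fun y _ => (hderiv y).hasDerivWithinAt)
    (fun y hy => (h y hy.1).trans (by gcongr; exacts [hy.1, hy.2.le])) x (right_mem_Icc.2 hx)
  simpa [pow_succ, mul_assoc] using hbound

lemma abs_sin_sub_sum_le_of_cos {M : ℕ}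
    (hcos : ∀ x : ℝ, 0 ≤ x →
      |Real.cos x - ∑ m ∈ Finset.range M, (-1) ^ m / (2 * m).factorial * x ^ (2 * m)|
        ≤ 1 * x ^ (2 * M))
    {x : ℝ} (hx : 0 ≤ x) :
    |Real.sin x - ∑ m ∈ Finset.range M, (-1) ^ m / (2 * m + 1).factorial * x ^ (2 * m + 1)|
      ≤ 1 * x ^ (2 * M + 1) := by
  have h := abs_sub_sum_le_of_hasDerivAt Real.hasDerivAt_sin zero_le_one hcos hx
  simpa only [Real.sin_zero, sub_zero, div_div, ← Nat.cast_mul, mul_comm (Nat.factorial _),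
    ← Nat.factorial_succ] using h

lemma abs_cos_sub_sum_le (M : ℕ) {x : ℝ} (hx : 0 ≤ x) :
    |Real.cos x - ∑ m ∈ Finset.range M, (-1) ^ m / (2 * m).factorial * x ^ (2 * m)|
      ≤ 1 * x ^ (2 * M) := by
  induction M generalizing x with
  | zero => simpa using Real.abs_cos_le_one x
  | succ M ih =>
    have h := abs_sub_sum_le_of_hasDerivAt (f := fun x => -Real.cos x)
      (fun y => (Real.hasDerivAt_cos y).neg.congr_deriv (neg_neg _)) zero_le_one
      (fun _ hy => abs_sin_sub_sum_le_of_cos (fun _ => ih) hy) hx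
    simp only [div_div, ← Nat.cast_mul, mul_comm (Nat.factorial _), ← Nat.factorial_succ,
      Real.cos_zero] at h
    rw [Finset.sum_range_succ', ← abs_neg]
    refine le_of_eq_of_le (congrArg abs ?_) h
    simp only [mul_add, mul_one, pow_succ (-1 : ℝ), mul_neg, neg_div, neg_mul,
      Finset.sum_neg_distrib, mul_zero, pow_zero, Nat.factorial_zero, Nat.cast_one, div_one]
    ring

/-- The solutions `cos (x - c)` of `f'' = -f` of amplitude one; `c = 0` is the cosine and
`c = π / 2` the sine. -/
def shiftedCos (c x : ℝ) : ℂ := Real.cos (x - c)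

lemma hasDerivAt_shiftedCos (c x : ℝ) : HasDerivAt (shiftedCos c) (shiftedCos (c - π / 2) x) x := by
  refine (((hasDerivAt_id x).sub_const c).cos.ofReal_comp).congr_deriv ?_
  rw [shiftedCos, ← sub_add, Real.cos_add_pi_div_two, id, mul_one]

lemma deriv_shiftedCos (c : ℝ) : deriv (shiftedCos c) = shiftedCos (c - π / 2) :=
  funext fun x => (hasDerivAt_shiftedCos c x).deriv

lemma deriv_deriv_shiftedCos (c : ℝ) : deriv (deriv (shiftedCos c)) = -shiftedCos c := by
  funext x
  rw [deriv_shiftedCos, deriv_shiftedCos, Pi.neg_apply, shiftedCos, shiftedCos, sub_sub, add_halves,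
    ← sub_add, Real.cos_add_pi, ofReal_neg]

lemma isBoundedC1_shiftedCos (c : ℝ) : IsBoundedC1 (shiftedCos c) := by
  have hbound : ∀ c x, ‖shiftedCos c x‖ ≤ 1 := fun c x => by
    simpa only [shiftedCos, norm_real, Real.norm_eq_abs] using Real.abs_cos_le_one (x - c)
  have hdiff : ∀ c, Differentiable ℝ (shiftedCos c) :=
    fun c x => (hasDerivAt_shiftedCos c x).differentiableAt
  refine ⟨hdiff c, ?_, ⟨1, hbound c⟩, 1, ?_⟩ <;> rw [deriv_shiftedCos]
  exacts [(hdiff _).continuous, hbound _]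

lemma hasExpansion_shiftedCos (k : Fin 2) :
    HasExpansion (shiftedCos (k * (π / 2))) (fun m => 2 * m + k)
      fun m => (-1) ^ m / ((2 * m + k).factorial : ℂ) := by
  refine fun M => ⟨1, fun x hx => ?_⟩
  simp only [shiftedCos, smul_eq_mul, mul_comm ((x : ℂ) ^ _)]
  fin_cases k
  · have hcos := abs_cos_sub_sum_le M hx
    rw [← Real.norm_eq_abs, ← norm_real] at hcos
    simpa using hcos
  · have hsin := abs_sin_sub_sum_le_of_cos (fun _ => abs_cos_sub_sum_le M) hx
    rw [← Real.norm_eq_abs, ← norm_real] at hsin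
    simpa [Real.cos_sub_pi_div_two] using hsin

end ShiftedCosine

section LinearODE

variable {ι E : Type*} [Fintype ι] [NormedAddCommGroup E] [NormedSpace ℂ E]

/-- The family `w` of `E`-valued functions solves the linear system `w' = M w`. -/
def IsSystemSolution (M : ℝ → Matrix ι ι ℂ) (w : ℝ → ι → E) : Prop :=
  ∀ x i, HasDerivAt (fun x => w x i) (∑ j, M x i j • w x j) x

open scoped Matrix.Norms.Operator in
lemma IsSystemSolution.ext {M : ℝ → Matrix ι ι ℂ} (hM : Continuous M) {f g : ℝ → ι → ℂ}
    (hf : IsSystemSolution M f) (hg : IsSystemSolution M g) {x₀ : ℝ} (h : f x₀ = g x₀) :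
    f = g := by
  funext x
  obtain ⟨a, ha⟩ := exists_lt (min x x₀)
  obtain ⟨b, hb⟩ := exists_gt (max x x₀)
  have hx : x ∈ Ioo a b := ⟨(lt_min_iff.1 ha).1, (max_lt_iff.1 hb).1⟩
  have hx₀ : x₀ ∈ Ioo a b := ⟨(lt_min_iff.1 ha).2, (max_lt_iff.1 hb).2⟩
  obtain ⟨K, hK⟩ := isCompact_Icc.exists_bound_of_continuousOn (s := Icc a b) hM.continuousOn
  have hlip : ∀ t ∈ Ioo a b, LipschitzOnWith K.toNNReal (fun y : ι → ℂ => M t *ᵥ y) univ := by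
    refine fun t ht => LipschitzOnWith.of_dist_le_mul fun y _ z _ => ?_
    rw [dist_eq_norm, dist_eq_norm, ← Matrix.mulVec_sub]
    refine (Matrix.linfty_opNorm_mulVec _ _).trans ?_
    gcongr
    exact (hK t (Ioo_subset_Icc_self ht)).trans (Real.le_coe_toNNReal K)
  have hsol : ∀ {w : ℝ → ι → ℂ}, IsSystemSolution M w →
      ∀ t ∈ Ioo a b, HasDerivAt w (M t *ᵥ w t) t ∧ w t ∈ univ :=
    fun hw t _ => ⟨hasDerivAt_pi.2 (hw t), mem_univ _⟩
  exact ODE_solution_unique_of_mem_Ioo hlip hx₀ (hsol hf) (hsol hg) h hx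

lemma exists_clm_apply_eq {ι : Type*} [Finite ι] {v : ι → E} (hv : LinearIndependent ℂ v)
    (c : ι → ℂ) :
    ∃ φ : E →L[ℂ] ℂ, ∀ i, φ (v i) = c i := by
  classical
  cases nonempty_fintype ι
  obtain ⟨φ, hφ⟩ := SeparatingDual.dualMap_surjective_iff.2
    (linearIndependent_iff_injective_fintypeLinearCombination.1 hv)
    (Fintype.linearCombination ℂ c)
  refine ⟨φ, fun i => ?_⟩
  simpa using LinearMap.congr_fun hφ (Pi.single i 1)

/-- The functional matching `w` to `g` at one point matches them everywhere, by uniqueness. -/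
lemma IsSystemSolution.exists_clm_apply_eq {M : ℝ → Matrix ι ι ℂ} (hM : Continuous M)
    {w : ℝ → ι → E} (hw : IsSystemSolution M w) {x₀ : ℝ} (hindep : LinearIndependent ℂ (w x₀))
    {g : ℝ → ι → ℂ} (hg : IsSystemSolution M g) :
    ∃ φ : E →L[ℂ] ℂ, ∀ x i, φ (w x i) = g x i := by
  obtain ⟨φ, hφ⟩ := IFunction.exists_clm_apply_eq hindep (g x₀)
  have hφw : IsSystemSolution M fun x i => φ (w x i) := fun x i =>
    ((φ.restrictScalars ℝ).hasFDerivAt.comp_hasDerivAt x (hw x i)).congr_deriv (by simp)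
  exact ⟨φ, fun x i => congrFun (congrFun (hφw.ext hM hg (funext hφ)) x) i⟩

end LinearODE

section HypergeometricODE

variable {E : Type*} [NormedAddCommGroup E] [NormedSpace ℂ E] {lam : ℂ} {f : ℝ → E}

/-- The companion matrix of `y''' = eˣ (4 y'' + (8 lam + 2) y' + 2 lam (2 lam + 1) y)`, the
Picard–Fuchs equation of the `I`-function of `Tot(O_{ℙ²}(-2))` in the variable `x = log q`. -/
def companionMatrix (lam : ℂ) (x : ℝ) : Matrix (Fin 3) (Fin 3) ℂ :=
  !![0, 1, 0; 0, 0, 1; 0, 0, 0] +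
    (Real.exp x : ℂ) • !![0, 0, 0; 0, 0, 0; 2 * lam * (2 * lam + 1), 8 * lam + 2, 4]

lemma continuous_companionMatrix (lam : ℂ) : Continuous (companionMatrix lam) := by
  unfold companionMatrix
  fun_prop

lemma isSystemSolution_companionMatrix {y : ℕ → ℝ → E}
    (hy : ∀ i < 3, ∀ x, HasDerivAt (y i) (y (i + 1) x) x)
    (hode : ∀ x, y 3 x = (Real.exp x : ℂ) •
      ((4 : ℂ) • y 2 x + (8 * lam + 2) • y 1 x + (2 * lam * (2 * lam + 1)) • y 0 x)) :
    IsSystemSolution (companionMatrix lam) fun x (i : Fin 3) => y i x := by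
  intro x i
  refine (hy i i.is_lt x).congr_deriv ?_
  fin_cases i
  · simp [companionMatrix, Fin.sum_univ_three]
  · simp [companionMatrix, Fin.sum_univ_three]
  · simp [companionMatrix, Fin.sum_univ_three, hode]
    module

lemma contDiff_eulerOp_iterate (lam : ℂ) {n i : ℕ} (hf : ContDiff ℝ (n + i : ℕ) f) :
    ContDiff ℝ n ((eulerOp lam)^[i] f) := by
  induction i generalizing f with
  | zero => exact hf
  | succ i ih =>
    have hderiv : ContDiff ℝ (n + i : ℕ) (deriv f) := hf.iterate_deriv' _ 1
    have hf' : ContDiff ℝ (n + i : ℕ) f := hf.of_le (mod_cast Nat.le_succ _)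
    refine ih ?_
    unfold eulerOp
    have hcast : ContDiff ℝ (n + i : ℕ) (fun τ : ℝ => (τ : ℂ)) := ofRealCLM.contDiff
    fun_prop

lemma deriv_eulerOp (hf : Differentiable ℝ f) (hf' : Differentiable ℝ (deriv f)) (τ : ℝ) :
    deriv (eulerOp lam f) τ = eulerOp (lam + 1 / 2) (deriv f) τ := by
  have hτ : HasDerivAt (fun τ : ℝ => (τ : ℂ) / 2) (1 / 2) τ :=
    (hasDerivAt_id τ).ofReal_comp.div_const 2
  refine (((hf τ).hasDerivAt.const_smul lam).add (hτ.smul (hf' τ).hasDerivAt)).deriv.trans ?_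
  rw [eulerOp]
  module

lemma sq_smul_deriv_deriv (lam : ℂ) (hf : Differentiable ℝ f) (hf' : Differentiable ℝ (deriv f))
    (τ : ℝ) :
    (τ : ℂ) ^ 2 • deriv (deriv f) τ = (4 : ℂ) • (eulerOp lam)^[2] f τ
      - (8 * lam + 2) • eulerOp lam f τ + (2 * lam * (2 * lam + 1)) • f τ := by
  simp only [Function.iterate_succ, Function.iterate_zero, Function.comp_apply, id]
  rw [eulerOp, deriv_eulerOp hf hf', eulerOp, eulerOp]
  module

/-- The function `q^{-lam} f(q^{-1/2})` in the variable `x = log q`. -/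
def logPullback (lam : ℂ) (f : ℝ → E) (x : ℝ) : E :=
  cexp (-lam * x) • f (Real.exp (-x / 2))

lemma hasDerivAt_logPullback (hf : Differentiable ℝ f) (x : ℝ) :
    HasDerivAt (logPullback lam f) (-logPullback lam (eulerOp lam f) x) x := by
  have hexp : HasDerivAt (fun x : ℝ => cexp (-lam * x)) (cexp (-lam * x) * -lam) x := by
    simpa using ((hasDerivAt_id x).ofReal_comp.const_mul (-lam)).cexp
  have hτ : HasDerivAt (fun x : ℝ => Real.exp (-x / 2)) (Real.exp (-x / 2) * (-1 / 2)) x :=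
    ((hasDerivAt_neg x).div_const 2).exp
  refine (hexp.smul ((hf _).hasDerivAt.scomp x hτ)).congr_deriv ?_
  rw [logPullback, eulerOp, ← coe_smul, Function.comp_apply]
  push_cast
  module

lemma isSystemSolution_logPullback (hf : ContDiff ℝ 3 f)
    (hode : (eulerOp lam)^[3] f = -deriv (deriv f)) :
    IsSystemSolution (companionMatrix lam)
      fun x (i : Fin 3) => (-1 : ℂ) ^ (i : ℕ) • logPullback lam ((eulerOp lam)^[i] f) x := by
  refine isSystemSolution_companionMatrix
    (y := fun i x => (-1 : ℂ) ^ i • logPullback lam ((eulerOp lam)^[i] f) x)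
    (fun i hi x => ?_) fun x => ?_
  · have hdiff : Differentiable ℝ ((eulerOp lam)^[i] f) :=
      (contDiff_eulerOp_iterate (n := 1) lam (hf.of_le (mod_cast (by omega)))).differentiable
        (by simp)
    refine ((hasDerivAt_logPullback hdiff x).const_smul ((-1 : ℂ) ^ i)).congr_deriv ?_
    rw [Function.iterate_succ_apply', pow_succ]
    module
  · have hsq := sq_smul_deriv_deriv lam (hf.differentiable (by simp))
      ((hf.iterate_deriv' 2 1).differentiable (by simp)) (Real.exp (-x / 2))
    have hexp : (Real.exp x : ℂ) * (Real.exp (-x / 2) : ℂ) ^ 2 = 1 := by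
      rw [← ofReal_pow, ← ofReal_mul, ← Real.exp_nat_mul, ← Real.exp_add, Nat.cast_ofNat,
        mul_div_cancel₀ _ two_ne_zero, add_neg_cancel, Real.exp_zero, ofReal_one]
    have hderiv : deriv (deriv f) (Real.exp (-x / 2)) = (Real.exp x : ℂ) •
        ((Real.exp (-x / 2) : ℂ) ^ 2 • deriv (deriv f) (Real.exp (-x / 2))) := by
      rw [smul_smul, hexp, one_smul]
    simp only [logPullback, hode, Pi.neg_apply]
    rw [hderiv, hsq, Function.iterate_one, Function.iterate_zero, id]
    module

end HypergeometricODE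

section FrobeniusSeries

variable {A : Type*} [NormedCommRing A] {v : ℕ → A}

/-- The power series with coefficients `v` converges absolutely on all of `ℂ`. -/
def HasInfiniteRadius (v : ℕ → A) : Prop := ∀ r : ℝ, Summable fun n => ‖v n‖ * r ^ n

/-- The action of `q d/dq` on the coefficients of `exp (H log q) ∑ qⁿ v n`. -/
def eulerShift (H : A) (v : ℕ → A) (n : ℕ) : A := ((n : A) + H) * v n

lemma hasInfiniteRadius_of_tendsto_zero {c : ℕ → A} (hv : ∀ n, v (n + 1) = c n * v n)
    (hc : Tendsto c atTop (𝓝 0)) : HasInfiniteRadius v := by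
  intro r
  have hratio : Tendsto (fun n => ‖c n‖ * |r|) atTop (𝓝 0) := by
    simpa using hc.norm.mul_const |r|
  refine summable_of_ratio_norm_eventually_le (r := 1 / 2) (by norm_num) ?_
  filter_upwards [hratio.eventually_le_const one_half_pos] with n hn
  simp only [hv, pow_succ, norm_mul (_ : ℝ), norm_norm, Real.norm_eq_abs r]
  calc ‖c n * v n‖ * (‖r ^ n‖ * |r|) ≤ ‖c n‖ * ‖v n‖ * (‖r ^ n‖ * |r|) := by
        gcongr
        exact norm_mul_le _ _
    _ = ‖c n‖ * |r| * (‖v n‖ * ‖r ^ n‖) := by ring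
    _ ≤ 1 / 2 * (‖v n‖ * ‖r ^ n‖) := by gcongr

lemma HasInfiniteRadius.eulerShift (hv : HasInfiniteRadius v) (H : A) :
    HasInfiniteRadius (eulerShift H v) := by
  refine fun r => ((hv (2 * |r|)).mul_left (1 + ‖H‖)).of_norm_bounded fun n => ?_
  have htwo : (n : ℝ) ≤ 2 ^ n := mod_cast Nat.lt_two_pow_self.le
  have hone : (1 : ℝ) ≤ 2 ^ n := one_le_pow₀ one_le_two
  have hnorm : ‖IFunction.eulerShift H v n‖ ≤ (1 + ‖H‖) * 2 ^ n * ‖v n‖ := calc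
    _ = ‖n • v n + H * v n‖ := by rw [IFunction.eulerShift, add_mul, nsmul_eq_mul]
    _ ≤ n * ‖v n‖ + ‖H‖ * ‖v n‖ :=
      (norm_add_le _ _).trans (add_le_add norm_nsmul_le (norm_mul_le _ _))
    _ ≤ 2 ^ n * ‖v n‖ + (‖H‖ * 2 ^ n) * ‖v n‖ := by
      gcongr
      exact le_mul_of_one_le_right (norm_nonneg H) hone
    _ = _ := by ring
  rw [norm_mul, norm_norm, norm_pow, Real.norm_eq_abs, mul_pow]
  calc _ ≤ (1 + ‖H‖) * 2 ^ n * ‖v n‖ * |r| ^ n := by gcongr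
    _ = _ := by ring

lemma HasInfiniteRadius.eulerShift_iterate (hv : HasInfiniteRadius v) (H : A) (i : ℕ) :
    HasInfiniteRadius ((IFunction.eulerShift H)^[i] v) := by
  induction i generalizing v with
  | zero => exact hv
  | succ _ ih => exact ih (hv.eulerShift H)

variable [NormedAlgebra ℂ A]

/-- The power series with coefficients `v`, in the variable `x = log q`. -/
def expSeries (v : ℕ → A) (x : ℝ) : A := ∑' n, (Real.exp x : ℂ) ^ n • v n

/-- The Frobenius series `exp (H log q) ∑ qⁿ v n`, in the variable `x = log q`. -/
def frobeniusSeries (H : A) (v : ℕ → A) (x : ℝ) : A :=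
  NormedSpace.exp ((x : ℂ) • H) * expSeries v x

lemma norm_exp_pow_smul_le {x r : ℝ} (h : Real.exp x ≤ r) (n : ℕ) (a : A) :
    ‖(Real.exp x : ℂ) ^ n • a‖ ≤ ‖a‖ * r ^ n := by
  rw [norm_smul, norm_pow, norm_real, Real.norm_of_nonneg (Real.exp_pos x).le, mul_comm]
  gcongr

variable [CompleteSpace A]

lemma HasInfiniteRadius.summable (hv : HasInfiniteRadius v) (x : ℝ) :
    Summable fun n => (Real.exp x : ℂ) ^ n • v n :=
  (hv _).of_norm_bounded fun n => norm_exp_pow_smul_le le_rfl n (v n)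

lemma hasDerivAt_expSeries (hv : HasInfiniteRadius v) (x : ℝ) :
    HasDerivAt (expSeries v) (expSeries (eulerShift 0 v) x) x := by
  refine hasDerivAt_tsum_of_isPreconnected (t := Iio (x + 1)) (y₀ := x)
    (g := fun n y => (Real.exp y : ℂ) ^ n • v n)
    (g' := fun n y => (Real.exp y : ℂ) ^ n • eulerShift 0 v n)
    (hv.eulerShift 0 (Real.exp (x + 1))) isOpen_Iio isPreconnected_Iio (fun n y _ => ?_)
    (fun n y hy => norm_exp_pow_smul_le (Real.exp_le_exp.2 (mem_Iio.1 hy).le) n _) (by simp)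
    (hv.summable x) (by simp)
  have hpow : HasDerivAt (fun y => (Real.exp y : ℂ) ^ n) (n * (Real.exp y : ℂ) ^ n) y := by
    simp only [← ofReal_pow, ← Real.exp_nat_mul]
    simpa [mul_comm] using ((hasDerivAt_id y).const_mul (n : ℝ)).exp.ofReal_comp
  refine (hpow.smul_const (v n)).congr_deriv ?_
  rw [eulerShift, add_zero, mul_comm (n : ℂ), mul_smul, Nat.cast_smul_eq_nsmul, nsmul_eq_mul]

lemma expSeries_eulerShift (hv : HasInfiniteRadius v) (H : A) (x : ℝ) :
    expSeries (eulerShift H v) x = H * expSeries v x + expSeries (eulerShift 0 v) x := by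
  have hv' := hv.eulerShift 0
  simp only [expSeries]
  rw [← (hv.summable x).tsum_mul_left, ← ((hv.summable x).mul_left H).tsum_add (hv'.summable x)]
  refine tsum_congr fun n => ?_
  rw [mul_smul_comm, ← smul_add, eulerShift, eulerShift]
  ring_nf

lemma hasDerivAt_frobeniusSeries (H : A) (hv : HasInfiniteRadius v) (x : ℝ) :
    HasDerivAt (frobeniusSeries H v) (frobeniusSeries H (eulerShift H v) x) x := by
  have hexp : HasDerivAt (fun y : ℝ => NormedSpace.exp ((y : ℂ) • H))
      (NormedSpace.exp ((x : ℂ) • H) * H) x := by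
    exact ((hasDerivAt_exp_smul_const H (x : ℂ)).scomp x
      (hasDerivAt_id x).ofReal_comp).congr_deriv (one_smul ℂ _)
  refine (hexp.mul (hasDerivAt_expSeries hv x)).congr_deriv ?_
  rw [frobeniusSeries, expSeries_eulerShift hv H]
  ring

lemma tendsto_expSeries_atBot (hv : HasInfiniteRadius v) :
    Tendsto (expSeries v) atBot (𝓝 (v 0)) := by
  have hexp : Tendsto (fun x => (Real.exp x : ℂ)) atBot (𝓝 0) := by
    simpa using Real.tendsto_exp_atBot.ofReal
  have hlim : Tendsto (expSeries v) atBot (𝓝 (∑' n, (0 : ℂ) ^ n • v n)) := by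
    refine tendsto_tsum_of_dominated_convergence (hv 1) (fun n => (hexp.pow n).smul_const _) ?_
    filter_upwards [eventually_le_atBot 0] with x hx n
    exact norm_exp_pow_smul_le (Real.exp_le_one_iff.2 hx) n _
  rw [tsum_eq_single 0 fun n hn => by simp [hn]] at hlim
  simpa using hlim

lemma linearIndependent_frobeniusSeries {ι : Type*} [Finite ι] {w : ι → ℕ → A}
    (hw : ∀ i, HasInfiniteRadius (w i)) (hindep : LinearIndependent ℂ fun i => w i 0) (H : A) :
    ∃ x, LinearIndependent ℂ fun i => frobeniusSeries H (w i) x := by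
  have hlim : Tendsto (fun x i => expSeries (w i) x) atBot (𝓝 fun i => w i 0) :=
    tendsto_pi_nhds.2 fun i => tendsto_expSeries_atBot (hw i)
  obtain ⟨x, hx⟩ :=
    (hlim.eventually (isOpen_setOfPred_linearIndependent.mem_nhds hindep)).exists
  let _ : NormedAlgebra ℚ A := NormedAlgebra.restrictScalars ℚ ℂ A
  have hunit : IsUnit (NormedSpace.exp ((x : ℂ) • H)) := NormedSpace.isUnit_exp _
  exact ⟨x, LinearIndependent.map' hx (LinearMap.mulLeft ℂ (NormedSpace.exp ((x : ℂ) • H)))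
    (LinearMap.ker_eq_bot.2 hunit.mul_right_injective)⟩

end FrobeniusSeries

section ICoefficients

variable {A : Type*} [NormedCommRing A]

lemma isBigO_add_natCast_mul (b c : A) :
    (fun n : ℕ => b + n * c) =O[atTop] fun n : ℕ => (n : ℝ) + 1 := by
  refine Asymptotics.IsBigO.of_bound (‖b‖ + ‖c‖) (Eventually.of_forall fun n => ?_)
  rw [← nsmul_eq_mul, Real.norm_of_nonneg (by positivity)]
  calc ‖b + n • c‖ ≤ ‖b‖ + n * ‖c‖ := (norm_add_le _ _).trans (by gcongr; exact norm_nsmul_le)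
    _ ≤ ‖b‖ + n * ‖c‖ + (n * ‖b‖ + ‖c‖) := le_add_of_nonneg_right (by positivity)
    _ = (‖b‖ + ‖c‖) * (n + 1) := by ring

variable [NormedAlgebra ℂ A] {H : A}

/-- The coefficients of the `I`-function of `Tot(O_{ℙ²}(-2))`, with `H` the hyperplane class and
`lam` the equivariant parameter. -/
def iCoeff (H : A) (lam : ℂ) (n : ℕ) : A :=
  (∏ l ∈ Finset.range (2 * n), (-2 * (H + algebraMap ℂ A lam) - (l : A))) *
    Ring.inverse (∏ l ∈ Finset.range n, (H + ((l : A) + 1)) ^ 3)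

/-- The factor by which `iCoeff` grows from `n` to `n + 1`. -/
def iRatio (H : A) (lam : ℂ) (n : ℕ) : A :=
  Ring.inverse (H + ((n : A) + 1)) ^ 3 *
    ((2 * (H + algebraMap ℂ A lam) + 2 * n) * (2 * (H + algebraMap ℂ A lam) + 2 * n + 1))

lemma iCoeff_zero (H : A) (lam : ℂ) : iCoeff H lam 0 = 1 := by simp [iCoeff]

lemma iCoeff_succ (H : A) (lam : ℂ) (n : ℕ) :
    iCoeff H lam (n + 1) = iRatio H lam n * iCoeff H lam n := by
  rw [iCoeff, iCoeff, iRatio, mul_add_one, Finset.prod_range_succ, Finset.prod_range_succ,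
    Finset.prod_range_succ _ n, Ring.mul_inverse_rev, Ring.inverse_pow]
  push_cast
  ring

lemma isUnit_add_natCast_add_one (hH : IsNilpotent H) (n : ℕ) : IsUnit (H + ((n : A) + 1)) := by
  have hn : IsUnit ((n : A) + 1) := by
    simpa using (IsUnit.mk0 _ (Nat.cast_add_one_ne_zero (R := ℂ) n)).map (algebraMap ℂ A)
  rw [add_comm]
  exact hH.isUnit_add_left_of_commute hn (Commute.all _ _)

lemma pow_three_mul_iCoeff_succ (hH : IsNilpotent H) (lam : ℂ) (n : ℕ) :
    (H + ((n : A) + 1)) ^ 3 * iCoeff H lam (n + 1) =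
      (2 * (H + algebraMap ℂ A lam) + 2 * n) * (2 * (H + algebraMap ℂ A lam) + 2 * n + 1) *
        iCoeff H lam n := by
  rw [iCoeff_succ, iRatio, ← mul_assoc, ← mul_assoc, ← mul_pow,
    Ring.mul_inverse_cancel _ (isUnit_add_natCast_add_one hH n), one_pow, one_mul]

lemma isBigO_inverse_add_natCast [CompleteSpace A] (H : A) :
    (fun n : ℕ => Ring.inverse (H + ((n : A) + 1))) =O[atTop] fun n : ℕ => ((n : ℝ) + 1)⁻¹ := by
  have hlim : Tendsto (fun n : ℕ => (n : ℂ) + 1) atTop (Bornology.cobounded ℂ) := by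
    simpa [Function.comp_def] using
      (tendsto_natCast_atTop_cobounded (α := ℂ)).comp (tendsto_add_atTop_nat 1)
  refine (((spectrum.resolvent_isBigO_inv (-H)).comp_tendsto hlim).congr_left fun n => ?_).trans
    (Asymptotics.isBigO_of_le _ fun n => ?_)
  · simp [resolvent, add_comm]
  · simp only [Function.comp_apply, norm_inv, ← Nat.cast_add_one, RCLike.norm_natCast, le_refl]

lemma tendsto_iRatio [CompleteSpace A] (H : A) (lam : ℂ) :
    Tendsto (iRatio H lam) atTop (𝓝 0) := by
  have hinv := isBigO_inverse_add_natCast H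
  set b := 2 * (H + algebraMap ℂ A lam)
  have hO : iRatio H lam =O[atTop] fun n : ℕ => ((n : ℝ) + 1)⁻¹ := by
    refine (((hinv.mul hinv).mul hinv).mul
      ((isBigO_add_natCast_mul b 2).mul (isBigO_add_natCast_mul (b + 1) 2))).congr
      (fun n => ?_) fun n => ?_
    · rw [iRatio]
      ring
    · field_simp
  refine hO.trans_tendsto ?_
  simpa only [one_div] using tendsto_one_div_add_atTop_nhds_zero_nat (𝕜 := ℝ)

lemma hasInfiniteRadius_iCoeff [CompleteSpace A] (H : A) (lam : ℂ) :
    HasInfiniteRadius (iCoeff H lam) :=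
  hasInfiniteRadius_of_tendsto_zero (iCoeff_succ H lam) (tendsto_iRatio H lam)

lemma eulerShift_iterate_three_iCoeff_succ (hH : IsNilpotent H) (lam : ℂ) (n : ℕ) :
    (eulerShift H)^[3] (iCoeff H lam) (n + 1) =
      (4 : ℂ) • (eulerShift H)^[2] (iCoeff H lam) n + (8 * lam + 2) • eulerShift H (iCoeff H lam) n
        + (2 * lam * (2 * lam + 1)) • iCoeff H lam n := by
  have hrec := pow_three_mul_iCoeff_succ hH lam n
  simp only [Function.iterate_succ_apply', Function.iterate_zero_apply, eulerShift,
    Algebra.smul_def, map_add, map_mul, map_ofNat, map_one, Nat.cast_add_one]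
  linear_combination hrec

lemma frobeniusSeries_iCoeff_ode [CompleteSpace A] (hH : H ^ 3 = 0) (lam : ℂ) (x : ℝ) :
    frobeniusSeries H ((eulerShift H)^[3] (iCoeff H lam)) x = (Real.exp x : ℂ) •
      ((4 : ℂ) • frobeniusSeries H ((eulerShift H)^[2] (iCoeff H lam)) x
        + (8 * lam + 2) • frobeniusSeries H (eulerShift H (iCoeff H lam)) x
        + (2 * lam * (2 * lam + 1)) • frobeniusSeries H (iCoeff H lam) x) := by
  have hsum := fun i => ((hasInfiniteRadius_iCoeff H lam).eulerShift_iterate H i).summable x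
  have hzero : (eulerShift H)^[3] (iCoeff H lam) 0 = 0 := by
    simp only [Function.iterate_succ_apply', Function.iterate_zero_apply, eulerShift, Nat.cast_zero]
    linear_combination iCoeff H lam 0 * hH
  have hcomb := (((hsum 2).hasSum.const_smul (4 : ℂ)).add
    ((hsum 1).hasSum.const_smul (8 * lam + 2))).add
    ((hsum 0).hasSum.const_smul (2 * lam * (2 * lam + 1)))
  have hseries : expSeries ((eulerShift H)^[3] (iCoeff H lam)) x = (Real.exp x : ℂ) •
      ((4 : ℂ) • expSeries ((eulerShift H)^[2] (iCoeff H lam)) x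
        + (8 * lam + 2) • expSeries (eulerShift H (iCoeff H lam)) x
        + (2 * lam * (2 * lam + 1)) • expSeries (iCoeff H lam) x) := by
    rw [expSeries, (hsum 3).tsum_eq_zero_add, hzero, smul_zero, zero_add]
    refine ((hcomb.const_smul (Real.exp x : ℂ)).congr_fun fun n => ?_).tsum_eq
    rw [eulerShift_iterate_three_iCoeff_succ ⟨3, hH⟩]
    simp only [pow_succ, Function.iterate_one, Function.iterate_zero_apply]
    module
  rw [frobeniusSeries, hseries]
  simp only [frobeniusSeries, mul_smul_comm, mul_add]

lemma isSystemSolution_iCoeff [CompleteSpace A] (hH : H ^ 3 = 0) (lam : ℂ) :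
    IsSystemSolution (companionMatrix lam)
      fun x (i : Fin 3) => frobeniusSeries H ((eulerShift H)^[i] (iCoeff H lam)) x := by
  refine isSystemSolution_companionMatrix
    (y := fun i => frobeniusSeries H ((eulerShift H)^[i] (iCoeff H lam))) (fun i _ x => ?_)
    (frobeniusSeries_iCoeff_ode hH lam)
  rw [Function.iterate_succ_apply']
  exact hasDerivAt_frobeniusSeries H ((hasInfiniteRadius_iCoeff H lam).eulerShift_iterate H i) x

lemma linearIndependent_eulerShift_iCoeff
    (hbasis : LinearIndependent ℂ ![1, H, H ^ 2]) (lam : ℂ) :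
    LinearIndependent ℂ fun i : Fin 3 => (eulerShift H)^[i] (iCoeff H lam) 0 := by
  convert hbasis using 1
  funext i
  fin_cases i <;>
    simp [eulerShift, iCoeff_zero, pow_two]

end ICoefficients

section OrbifoldComponent

variable {lam : ℂ}

lemma contDiff_gammaTransform_iterate {E : Type*} [NormedAddCommGroup E] [NormedSpace ℂ E]
    {f : ℝ → E} (hlam : 0 < lam.re) (n k : ℕ) (hf : ∀ i, IsBoundedC1 (deriv^[i] f)) :
    ContDiff ℝ k ((gammaTransform lam)^[n] f) := by
  induction k generalizing f lam with
  | zero => exact contDiff_zero.2 (isBoundedC1_gammaTransform_iterate hlam n (hf 0)).continuous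
  | succ k ih =>
    have hf₀ : IsBoundedC1 f := hf 0
    rw [Nat.cast_succ, contDiff_succ_iff_deriv, deriv_gammaTransform_iterate hlam n hf₀]
    exact ⟨(isBoundedC1_gammaTransform_iterate hlam n hf₀).differentiable, by simp,
      ih (re_add_half_pos hlam) fun i => hf (i + 1)⟩

lemma isBoundedC1_deriv_iterate_shiftedCos (c : ℝ) (i : ℕ) :
    IsBoundedC1 (deriv^[i] (shiftedCos c)) := by
  induction i generalizing c with
  | zero => exact isBoundedC1_shiftedCos c
  | succ i ih => rw [Function.iterate_succ_apply, deriv_shiftedCos]; exact ih _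

lemma isSystemSolution_gammaTransform_shiftedCos (hlam : 0 < lam.re) (c : ℝ) :
    IsSystemSolution (companionMatrix lam) fun x (i : Fin 3) =>
      (-1 : ℂ) ^ (i : ℕ) •
        logPullback lam ((eulerOp lam)^[i] ((gammaTransform lam)^[3] (shiftedCos c))) x := by
  have hbdd := isBoundedC1_deriv_iterate_shiftedCos c
  exact isSystemSolution_logPullback (contDiff_gammaTransform_iterate hlam 3 3 hbdd)
    (eulerOp_iterate_gammaTransform_iterate hlam 3 (hbdd 0) (hbdd 1) (deriv_deriv_shiftedCos c))

lemma Gamma_add_natCast_div_Gamma {s : ℂ} (hs : ∀ n : ℕ, s ≠ -n) (m : ℕ) :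
    Gamma (s + m) / Gamma s = (-1) ^ m * ∏ l ∈ Finset.range m, (-s - l) := by
  rw [Gamma_add_nat_div_Gamma_eq s hs, ← descPochhammer_eval_eq_prod_range,
    ← ascPochhammer_eval_neg_eq_descPochhammer, neg_neg]

/-- The coefficients of the `1_k`-component of the `I`-function of `[ℂ³/ℤ₂]`. -/
def orbifoldCoeff (lam : ℂ) (k : Fin 2) (m : ℕ) : ℂ :=
  (∏ l ∈ Finset.range m, (-lam - ((k : ℂ) / 2 + l)) ^ 3) / (2 * m + k).factorial

lemma Gamma_pow_three_smul_eq_orbifoldCoeff (hlam : 0 < lam.re) (k : Fin 2) (m : ℕ) :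
    (Gamma (lam + k / 2) ^ 3)⁻¹ • Gamma (lam + (2 * m + k : ℕ) / 2) ^ 3 •
      ((-1) ^ m / ((2 * m + k).factorial : ℂ)) = orbifoldCoeff lam k m := by
  have hne : ∀ n : ℕ, lam + k / 2 ≠ -n := fun n h => by
    have hre := h ▸ re_add_natCast_div_two_pos hlam k
    simp only [neg_re, natCast_re, Left.neg_pos_iff] at hre
    exact n.cast_nonneg.not_gt hre
  have hsplit : lam + (2 * m + k : ℕ) / 2 = lam + k / 2 + m := by push_cast; ring
  have hsign : ((-1 : ℂ) ^ m) ^ 4 = 1 := by rw [← pow_mul, mul_comm, pow_mul]; norm_num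
  calc _ = (Gamma (lam + k / 2 + m) / Gamma (lam + k / 2)) ^ 3 * (-1) ^ m /
        (2 * m + k).factorial := by rw [hsplit, smul_eq_mul, smul_eq_mul]; ring
    _ = ((-1) ^ m) ^ 4 * (∏ l ∈ Finset.range m, (-(lam + k / 2) - l : ℂ)) ^ 3 /
        (2 * m + k).factorial := by rw [Gamma_add_natCast_div_Gamma hne]; ring
    _ = orbifoldCoeff lam k m := by
        simp only [hsign, one_mul, orbifoldCoeff, Finset.prod_pow, neg_add', sub_sub]

lemma hasExpansion_smul_gammaTransform_shiftedCos (hlam : 0 < lam.re) (k : Fin 2) :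
    HasExpansion ((Gamma (lam + k / 2) ^ 3)⁻¹ •
        (gammaTransform lam)^[3] (shiftedCos (k * (π / 2))))
      (fun m => 2 * m + k) (orbifoldCoeff lam k) := by
  have h := ((hasExpansion_shiftedCos k).gammaTransform_iterate hlam
    (isBoundedC1_shiftedCos _) 3).const_smul (Gamma (lam + k / 2) ^ 3)⁻¹
  exact (funext (Gamma_pow_three_smul_eq_orbifoldCoeff hlam k)) ▸ h

lemma exp_mul_pow_exp_log {q : ℝ} (hq : 0 < q) (lam : ℂ) (n : ℕ) :
    cexp (-lam * Real.log q) * (Real.exp (-Real.log q / 2) : ℂ) ^ n =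
      (q : ℂ) ^ (-((n : ℂ) / 2 + lam)) := by
  rw [cpow_def_of_ne_zero (ofReal_ne_zero.2 hq.ne'), ← ofReal_log hq.le, ofReal_exp,
    ← Complex.exp_nat_mul, ← Complex.exp_add]
  push_cast
  ring_nf

lemma HasExpansion.logPullback {E : Type*} [NormedAddCommGroup E] [NormedSpace ℂ E] {f : ℝ → E}
    {p : ℕ → ℕ} {a : ℕ → E} (h : HasExpansion f p a) (lam : ℂ) (M : ℕ) :
    ∃ C, ∀ q : ℝ, 0 < q → ‖logPullback lam f (Real.log q) -
        ∑ m ∈ Finset.range M, (q : ℂ) ^ (-((p m : ℂ) / 2 + lam)) • a m‖ ≤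
      C * q ^ (-((p M : ℝ) / 2 + lam.re)) := by
  obtain ⟨C, hC⟩ := h M
  refine ⟨C, fun q hq => ?_⟩
  have hnorm : ‖cexp (-lam * Real.log q)‖ * Real.exp (-Real.log q / 2) ^ p M =
      q ^ (-((p M : ℝ) / 2 + lam.re)) := by
    have := congrArg norm (exp_mul_pow_exp_log hq lam (p M))
    rw [norm_mul, norm_pow, norm_real, Real.norm_of_nonneg (Real.exp_pos _).le,
      norm_cpow_eq_rpow_re_of_pos hq] at this
    simpa using this
  simp only [IFunction.logPullback, ← exp_mul_pow_exp_log hq, mul_smul, ← Finset.smul_sum,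
    ← smul_sub, norm_smul, ← hnorm]
  calc _ ≤ ‖cexp (-lam * Real.log q)‖ * (C * Real.exp (-Real.log q / 2) ^ p M) := by
        gcongr
        exact hC _ (Real.exp_pos _).le
    _ = _ := by ring

end OrbifoldComponent

section Comparison

variable {A : Type*} [NormedCommRing A] [NormedAlgebra ℂ A] [CompleteSpace A] {H : A} {lam : ℂ}

lemma exists_clm_frobeniusSeries_iCoeff (hH : H ^ 3 = 0)
    (hbasis : LinearIndependent ℂ ![1, H, H ^ 2]) (hlam : 0 < lam.re) (c : ℝ) :
    ∃ φ : A →L[ℂ] ℂ, ∀ x, φ (frobeniusSeries H (iCoeff H lam) x) =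
      logPullback lam ((gammaTransform lam)^[3] (shiftedCos c)) x := by
  obtain ⟨x₀, hx₀⟩ := linearIndependent_frobeniusSeries
    (fun i : Fin 3 => (hasInfiniteRadius_iCoeff H lam).eulerShift_iterate H i)
    (linearIndependent_eulerShift_iCoeff hbasis lam) H
  obtain ⟨φ, hφ⟩ := (isSystemSolution_iCoeff hH lam).exists_clm_apply_eq
    (continuous_companionMatrix lam) hx₀ (isSystemSolution_gammaTransform_shiftedCos hlam c)
  exact ⟨φ, fun x => by simpa using hφ x 0⟩

lemma exists_clm_hasExpansion_frobeniusSeries_iCoeff (hH : H ^ 3 = 0)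
    (hbasis : LinearIndependent ℂ ![1, H, H ^ 2]) (hlam : 0 < lam.re) (k : Fin 2) :
    ∃ (φ : A →L[ℂ] ℂ) (f : ℝ → ℂ), HasExpansion f (fun m => 2 * m + k) (orbifoldCoeff lam k) ∧
      ∀ x, φ (frobeniusSeries H (iCoeff H lam) x) = logPullback lam f x := by
  obtain ⟨φ, hφ⟩ := exists_clm_frobeniusSeries_iCoeff hH hbasis hlam (k * (π / 2))
  refine ⟨(Gamma (lam + k / 2) ^ 3)⁻¹ • φ, _, hasExpansion_smul_gammaTransform_shiftedCos hlam k,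
    fun x => ?_⟩
  rw [smul_apply, hφ, logPullback, logPullback, Pi.smul_apply, smul_comm]

end Comparison

end

end IFunction

open IFunction

theorem stmt_8_general {A : Type*} [NormedCommRing A] [NormedAlgebra ℂ A] [CompleteSpace A]
    (H : A) (hH : H ^ 3 = 0) (hbasis : LinearIndependent ℂ ![1, H, H ^ 2])
    (lam : ℂ) (hlam : 0 < lam.re)
    (u : ℕ → A)
    (hu : ∀ n : ℕ, u n =
      (∏ l ∈ Finset.range (2 * n), (-2 * (H + algebraMap ℂ A lam) - (l : A))) *
        Ring.inverse (∏ l ∈ Finset.range n, (H + ((l : A) + 1)) ^ 3))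
    (I : ℝ → A)
    (hI : ∀ q : ℝ, 0 < q →
      I q = NormedSpace.exp (((Real.log q : ℝ) : ℂ) • H) * ∑' n : ℕ, ((q : ℂ) ^ n) • u n) :
    ∃ L : A →L[ℂ] (Fin 2 → ℂ), ∀ k : Fin 2, ∀ M : ℕ, ∃ K : ℝ, ∀ q : ℝ, 0 < q →
      ‖L (I q) k - ∑ m ∈ Finset.range M,
          (∏ l ∈ Finset.range m, (-lam - ((k.val : ℂ) / 2 + (l : ℂ))) ^ 3) /
              ((2 * m + k.val).factorial : ℂ) *
            (q : ℂ) ^ (-((m : ℂ) + (k.val : ℂ) / 2 + lam))‖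
        ≤ K * q ^ (-((M : ℝ) + (k.val : ℝ) / 2 + lam.re)) := by
  choose φ f hf hφ using exists_clm_hasExpansion_frobeniusSeries_iCoeff hH hbasis hlam
  obtain rfl : u = iCoeff H lam := funext hu
  have hI' : ∀ q, 0 < q → I q = frobeniusSeries H (iCoeff H lam) (Real.log q) := fun q hq => by
    rw [hI q hq, frobeniusSeries, expSeries, Real.exp_log hq]
  refine ⟨ContinuousLinearMap.pi φ, fun k M => ?_⟩
  obtain ⟨K, hK⟩ := (hf k).logPullback lam M
  refine ⟨K, fun q hq => ?_⟩
  rw [hI' q hq, ContinuousLinearMap.pi_apply, hφ]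
  simpa [orbifoldCoeff, add_div, mul_comm] using hK q hq

/-- the main claim of the paper's example, Equation (2.1).  Let `λ ≥ 3` be a
positive irrational real.  With `A = ℂ[X]/(X³)` (formalized as a complete normed commutative
`ℂ`-algebra with `H³ = 0` and `1, H, H²` linearly independent) and
`I(q) = exp(H·log q)·Σ_{n≥0} qⁿ [∏_{l=0}^{2n−1}(−2(H+λ)−l)]·[∏_{l=1}^{n}(H+l)³]⁻¹` the
`I`-function of `Tot(O_{ℙ²}(−2))` at `z = 1`, there is a `ℂ`-linear map `L : A → ℂ²` such
that each component `F_k(q)` of `L(I(q))` admits the power series asymptotic expansion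
`Σ_{m≥0} [∏_{l=0}^{m−1}(−λ−(k/2+l))³/(2m+k)!]·q^{−m−k/2−λ}` as `q → +∞`; i.e.
`L·I^{Tot(O_{ℙ²}(−2))}(q, z=1) ∼ I^{[ℂ³/ℤ₂]}(t = q^{−1/2}, z = 1)`. -/
theorem stmt_8 {A : Type*} [NormedCommRing A] [NormedAlgebra ℂ A] [CompleteSpace A]
    (H : A) (hH : H ^ 3 = 0) (hbasis : LinearIndependent ℂ ![1, H, H ^ 2])
    (lam : ℝ) (hpos : 0 < lam) (hirr : Irrational lam) (hlam : 3 ≤ lam)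
    (u : ℕ → A)
    (hu : ∀ n : ℕ, u n =
      (∏ l ∈ Finset.range (2 * n), (-2 * (H + algebraMap ℂ A (lam : ℂ)) - (l : A))) *
        Ring.inverse (∏ l ∈ Finset.range n, (H + ((l : A) + 1)) ^ 3))
    (I : ℝ → A)
    (hI : ∀ q : ℝ, 0 < q →
      I q = NormedSpace.exp (((Real.log q : ℝ) : ℂ) • H) * ∑' n : ℕ, ((q : ℂ) ^ n) • u n) :
    ∃ L : A →ₗ[ℂ] (Fin 2 → ℂ), ∀ k : Fin 2, ∀ M : ℕ, ∃ K q₀ : ℝ, ∀ q : ℝ, q₀ ≤ q →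
      ‖L (I q) k - ∑ m ∈ Finset.range M,
          (((∏ l ∈ Finset.range m, (-lam - ((k.val : ℝ) / 2 + (l : ℝ))) ^ 3) /
              ((2 * m + k.val).factorial : ℝ) : ℝ) : ℂ) *
            (q : ℂ) ^ (-((m : ℂ) + (k.val : ℂ) / 2 + (lam : ℂ)))‖
        ≤ K * q ^ (-((M : ℝ) + (k.val : ℝ) / 2 + lam)) := by
  obtain ⟨L, hL⟩ := stmt_8_general H hH hbasis lam (by simpa using hpos) u hu I hI
  exact ⟨L, fun k M => (hL k M).imp fun K hK => ⟨1, fun q hq => by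
    simpa using hK q (by linarith)⟩⟩
end

section
/- For every real τ with 0 < τ < R, the series Σ_{k₀≥0} |A_{k₀}| · τ^{r·k₀/d} converges. In particular, the regularized I-function I^{reg}(τ) = Σ_{k₀≥0} A_{k₀} τ^{r(k₀/d+λ)} converges absolutely for all τ ∈ (0, R). -/
/-!
Raising `k` by `d` shifts every Gamma argument by an integer, so `A (k + d) / A k` is a rational
function of `k`. It has degree `-r - d + ∑ c j = 0`, and its limit is `∏ (-c j / d) ^ c j` divided
by `(r / d) ^ r`, of absolute value `(R ^ r)⁻¹`. Since `τ ^ (r k / d)` is multiplied by `τ ^ r` in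
the same step, the ratio test on each residue class modulo `d` gives convergence for `τ < R`. The
numerators `Γ(1 - c_j λ - ⟨k q_j + a_j⟩)` enter only through their periodicity in `k`. At a pole of
`Γ` the convention `Γ = 0`, `0⁻¹ = 0` gives the value `0` of the entire function `1 / Γ`, so the
recursion for `1 / Γ` holds at all real arguments.
-/

open Filter Topology

theorem summable_of_ratio_norm_eventually_le_add {E : Type*} [SeminormedAddCommGroup E]
    [CompleteSpace E] {f : ℕ → E} {d : ℕ} {ρ : ℝ} (hd : 0 < d) (hρ : ρ < 1)
    (h : ∀ᶠ n in atTop, ‖f (n + d)‖ ≤ ρ * ‖f n‖) : Summable f := by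
  have : NeZero d := ⟨hd.ne'⟩
  have summable_residueClass (i : ℕ) : Summable fun n ↦ f (d * n + i) := by
    have tendsto_index : Tendsto (fun n ↦ d * n + i) atTop atTop :=
      tendsto_atTop_mono (fun n ↦ le_add_right (Nat.le_mul_of_pos_left n hd)) tendsto_id
    refine summable_of_ratio_norm_eventually_le hρ ?_
    filter_upwards [tendsto_index.eventually h] with n hn
    rwa [mul_add_one, add_right_comm]
  have summable_indicator (a : ZMod d) :
      Summable ({n : ℕ | (n : ZMod d) = a}.indicator f) := by
    rw [← ZMod.natCast_zmod_val a, summable_indicator_mod_iff_summable]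
    exact summable_residueClass a.val
  rw [Finset.sum_indicator_mod d f, Finset.sum_fn]
  exact summable_sum fun a _ ↦ summable_indicator a

theorem tendsto_linear_div_natCast (α β : ℝ) :
    Tendsto (fun k : ℕ ↦ (α * k + β) / k) atTop (𝓝 α) := by
  have tendsto_add : Tendsto (fun k : ℕ ↦ α + β / k) atTop (𝓝 α) := by
    simpa using (tendsto_const_div_atTop_nhds_zero_nat β).const_add α
  refine tendsto_add.congr' ?_
  filter_upwards [eventually_ne_atTop 0] with k hk
  field_simp

theorem tendsto_ascPochhammer_eval_linear_div_pow (α β : ℝ) (n : ℕ) :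
    Tendsto (fun k : ℕ ↦ (ascPochhammer ℝ n).eval (α * k + β) / (k : ℝ) ^ n) atTop
      (𝓝 (α ^ n)) := by
  induction n with
  | zero => simp
  | succ n ih =>
    simpa only [ascPochhammer_succ_eval, pow_succ, mul_div_mul_comm, add_assoc] using
      ih.mul (tendsto_linear_div_natCast α (β + n))

theorem inv_Gamma_eq_self_mul_inv_Gamma_add_one (x : ℝ) :
    (Real.Gamma x)⁻¹ = x * (Real.Gamma (x + 1))⁻¹ := by
  rcases eq_or_ne x 0 with rfl | hx
  · simp
  · rw [Real.Gamma_add_one hx]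
    field_simp

theorem inv_Gamma_eq_ascPochhammer_mul_inv_Gamma_add_natCast (x : ℝ) (n : ℕ) :
    (Real.Gamma x)⁻¹ = (ascPochhammer ℝ n).eval x * (Real.Gamma (x + n))⁻¹ := by
  induction n with
  | zero => simp
  | succ n ih =>
    rw [ih, inv_Gamma_eq_self_mul_inv_Gamma_add_one, ascPochhammer_succ_eval, Nat.cast_succ,
      add_assoc, mul_assoc]

/-- The step-`d` ratio `f (k + d) / f k` of a sequence grows like `l * k ^ s`, in the sense that its
quotient by `k ^ s` tends to `l`. It is stated as a recursion so that `f` may vanish. -/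
def HasStepRatio (d : ℕ) (f : ℕ → ℝ) (s : ℤ) (l : ℝ) : Prop :=
  ∃ q : ℕ → ℝ, Tendsto q atTop (𝓝 l) ∧ ∀ᶠ k in atTop, f (k + d) = q k * (k : ℝ) ^ s * f k

namespace HasStepRatio

variable {d : ℕ} {f g : ℕ → ℝ} {s t : ℤ} {l m : ℝ}

theorem mul (hf : HasStepRatio d f s l) (hg : HasStepRatio d g t m) :
    HasStepRatio d (fun k ↦ f k * g k) (s + t) (l * m) := by
  obtain ⟨p, hp, hfp⟩ := hf
  obtain ⟨q, hq, hgq⟩ := hg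
  refine ⟨fun k ↦ p k * q k, hp.mul hq, ?_⟩
  filter_upwards [hfp, hgq, eventually_ne_atTop 0] with k hfk hgk hk
  rw [hfk, hgk, zpow_add₀ (Nat.cast_ne_zero.mpr hk)]
  ring

theorem of_periodic (hf : Function.Periodic f d) : HasStepRatio d f 0 1 :=
  ⟨fun _ ↦ 1, tendsto_const_nhds, .of_forall fun k ↦ by simp [hf k]⟩

theorem prod {ι : Type*} (S : Finset ι) {F : ι → ℕ → ℝ} {s : ι → ℤ} {l : ι → ℝ}
    (h : ∀ i ∈ S, HasStepRatio d (F i) (s i) (l i)) :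
    HasStepRatio d (fun k ↦ ∏ i ∈ S, F i k) (∑ i ∈ S, s i) (∏ i ∈ S, l i) := by
  classical
  induction S using Finset.induction_on with
  | empty => simpa using of_periodic (d := d) (f := fun _ ↦ 1) fun _ ↦ rfl
  | insert i S hi ih =>
    simp only [Finset.prod_insert hi, Finset.sum_insert hi]
    rw [Finset.forall_mem_insert] at h
    exact h.1.mul (ih h.2)

theorem rpow_linear {x : ℝ} (hx : 0 < x) (d : ℕ) (α β : ℝ) :
    HasStepRatio d (fun k ↦ x ^ (α * k + β)) 0 (x ^ (α * d)) := by
  refine ⟨fun _ ↦ x ^ (α * d), tendsto_const_nhds, .of_forall fun k ↦ ?_⟩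
  rw [zpow_zero, mul_one, ← Real.rpow_add hx]
  push_cast
  ring_nf

theorem inv_Gamma_add (hd : 0 < d) (n : ℕ) (b : ℝ) :
    HasStepRatio d (fun k ↦ (Real.Gamma (n / d * k + b))⁻¹) (-n) ((n / d : ℝ) ^ n)⁻¹ := by
  have hlim := tendsto_ascPochhammer_eval_linear_div_pow (n / d) b n
  have hlim_ne : (n / d : ℝ) ^ n ≠ 0 := by
    rw [div_pow]
    exact div_ne_zero (mod_cast n.pow_self_pos.ne') (by positivity)
  refine ⟨_, hlim.inv₀ hlim_ne, ?_⟩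
  filter_upwards [hlim.eventually_ne hlim_ne, eventually_ne_atTop 0] with k hne hk
  have hpoch := (div_ne_zero_iff.mp hne).1
  have hshift : (n / d * (k + d : ℕ) + b : ℝ) = n / d * k + b + n := by
    push_cast
    field_simp
    ring
  rw [hshift, inv_Gamma_eq_ascPochhammer_mul_inv_Gamma_add_natCast (n / d * k + b) n, zpow_neg,
    zpow_natCast, ← mul_inv, div_mul_cancel₀ _ (by positivity), inv_mul_cancel_left₀ hpoch]

theorem inv_Gamma_sub (hd : 0 < d) (n : ℕ) (b : ℝ) :
    HasStepRatio d (fun k ↦ (Real.Gamma (b - n / d * k))⁻¹) n ((-(n / d : ℝ)) ^ n) := by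
  refine ⟨_, tendsto_ascPochhammer_eval_linear_div_pow (-(n / d)) (b - n) n, ?_⟩
  filter_upwards [eventually_ne_atTop 0] with k hk
  have hshift : (b - n / d * (k + d : ℕ) : ℝ) = -(n / d) * k + (b - n) := by
    push_cast
    field_simp
    ring
  have hunshift : -(n / d) * k + (b - n) + n = b - n / d * k := by ring
  rw [hshift, inv_Gamma_eq_ascPochhammer_mul_inv_Gamma_add_natCast _ n, hunshift, zpow_natCast]
  field_simp

theorem inv_factorial (hd : 0 < d) :
    HasStepRatio d (fun k ↦ (k.factorial : ℝ)⁻¹) (-d) 1 := by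
  simpa [hd.ne', Real.Gamma_nat_eq_factorial] using inv_Gamma_add hd d 1

theorem summable (hf : HasStepRatio d f 0 l) (hd : 0 < d) (hl : |l| < 1) : Summable f := by
  obtain ⟨q, hq, hfq⟩ := hf
  obtain ⟨ρ, hlρ, hρ⟩ := exists_between hl
  refine summable_of_ratio_norm_eventually_le_add hd hρ ?_
  filter_upwards [hfq, hq.abs.eventually_le_const hlρ] with k hfk hqk
  rw [hfk, zpow_zero, mul_one, norm_mul, Real.norm_eq_abs]
  gcongr

end HasStepRatio

theorem periodic_fract_natCast_mul_div {d : ℕ} (hd : 0 < d) (c : ℕ) (a : ℝ) :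
    Function.Periodic (fun k : ℕ ↦ Int.fract ((k : ℝ) * ((c : ℝ) / (d : ℝ)) + a)) d := by
  intro k
  have hshift : ((k + d : ℕ) : ℝ) * (c / d) + a = k * (c / d) + a + c := by
    push_cast
    field_simp
    ring
  simp only [hshift, Int.fract_add_natCast]

section GammaQuotient

variable {ι : Type*} [Fintype ι]

theorem hasStepRatio_gammaQuotient {c : ι → ℕ} {d r : ℕ} (hd : 0 < d) (hsum : ∑ j, c j = d + r)
    {G : ι → ℕ → ℝ} (hG : ∀ j, Function.Periodic (G j) d) (b₀ : ℝ) (b : ι → ℝ) :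
    HasStepRatio d
      (fun k ↦ (Real.Gamma (r / d * k + b₀))⁻¹ * (k.factorial : ℝ)⁻¹ *
        ∏ j, G j k * (Real.Gamma (b j - c j / d * k))⁻¹)
      0 (((r / d : ℝ) ^ r)⁻¹ * ∏ j, (-(c j / d : ℝ)) ^ c j) := by
  have hfactors := ((HasStepRatio.inv_Gamma_add hd r b₀).mul (.inv_factorial hd)).mul
    (.prod Finset.univ fun j _ ↦
      (HasStepRatio.of_periodic (hG j)).mul (.inv_Gamma_sub hd (c j) (b j)))
  have hdegree : -(r : ℤ) + -d + ∑ j, (0 + (c j : ℤ)) = 0 := by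
    have : ∑ j, (c j : ℤ) = d + r := mod_cast hsum
    simp only [zero_add, this]
    ring
  simpa only [hdegree, mul_one, one_mul] using hfactors

theorem abs_gammaQuotient_stepRatio {c : ι → ℕ} {d r : ℕ} (hd : 0 < d)
    (hsum : ∑ j, c j = d + r) :
    |((r / d : ℝ) ^ r)⁻¹ * ∏ j, (-(c j / d : ℝ)) ^ c j| =
      ((r : ℝ) ^ r * (d : ℝ) ^ d * ∏ j, ((c j : ℝ) ^ c j)⁻¹)⁻¹ := by
  have habs (j : ι) : |(-(c j / d : ℝ)) ^ c j| = (c j : ℝ) ^ c j / (d : ℝ) ^ c j := by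
    rw [abs_pow, abs_neg, abs_of_nonneg (by positivity), div_pow]
  rw [abs_mul, abs_of_nonneg (by positivity), Finset.abs_prod]
  simp only [habs, Finset.prod_div_distrib, Finset.prod_inv_distrib, Finset.prod_pow_eq_pow_sum,
    hsum, div_pow, pow_add, mul_inv, inv_inv]
  field_simp

theorem gammaQuotient_radius_pow {r : ℕ} (hr : 0 < r) (c : ι → ℕ) (d : ℕ) :
    (((r : ℝ) ^ (r : ℝ) * (d : ℝ) ^ (d : ℝ) * ∏ j, (c j : ℝ) ^ (-(c j : ℝ))) ^
        ((1 : ℝ) / (r : ℝ))) ^ r =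
      (r : ℝ) ^ r * (d : ℝ) ^ d * ∏ j, ((c j : ℝ) ^ c j)⁻¹ := by
  have hprod : ∏ j, (c j : ℝ) ^ (-(c j : ℝ)) = ∏ j, ((c j : ℝ) ^ c j)⁻¹ :=
    Finset.prod_congr rfl fun j _ ↦ by rw [Real.rpow_neg (by positivity), Real.rpow_natCast]
  rw [hprod, Real.rpow_natCast, Real.rpow_natCast, one_div]
  exact Real.rpow_inv_natCast_pow (by positivity) hr.ne'

theorem stmt_9_general (c : ι → ℕ) (d r : ℕ) (hd : 0 < d) (hr : 0 < r)
    (hrsum : (∑ j, c j) = d + r) (a : ι → ℝ) (lam : ℝ)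
    (G : ι → ℕ → ℝ) (hG : ∀ j, Function.Periodic (G j) d) (A : ℕ → ℝ)
    (hA : ∀ k₀ : ℕ, A k₀ =
      (1 / (Real.Gamma (1 + (r : ℝ) * ((k₀ : ℝ) / (d : ℝ) + lam)) * (k₀.factorial : ℝ))) *
        ∏ j, G j k₀ /
          Real.Gamma (1 - (c j : ℝ) * lam - (k₀ : ℝ) * ((c j : ℝ) / (d : ℝ)) - a j))
    (R : ℝ)
    (hR : R = ((r : ℝ) ^ (r : ℝ) * (d : ℝ) ^ (d : ℝ) *
      ∏ j, (c j : ℝ) ^ (-(c j : ℝ))) ^ ((1 : ℝ) / (r : ℝ)))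
    (τ : ℝ) (hτ0 : 0 < τ) (hτR : τ < R) :
    Summable (fun k₀ : ℕ ↦ |A k₀| * τ ^ ((r : ℝ) * (k₀ : ℝ) / (d : ℝ))) ∧
    Summable (fun k₀ : ℕ ↦ |A k₀ * τ ^ ((r : ℝ) * ((k₀ : ℝ) / (d : ℝ) + lam))|) := by
  have hA_ratio : HasStepRatio d A 0 (((r / d : ℝ) ^ r)⁻¹ * ∏ j, (-(c j / d : ℝ)) ^ c j) := by
    convert hasStepRatio_gammaQuotient hd hrsum hG (1 + r * lam) fun j ↦ 1 - c j * lam - a j with k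
    rw [hA, one_div, mul_inv]
    ring_nf
  have hlimit : |((r / d : ℝ) ^ r)⁻¹ * ∏ j, (-(c j / d : ℝ)) ^ c j| = (R ^ r)⁻¹ := by
    rw [abs_gammaQuotient_stepRatio hd hrsum, hR, gammaQuotient_radius_pow hr]
  have hlimit_lt :
      |((r / d : ℝ) ^ r)⁻¹ * (∏ j, (-(c j / d : ℝ)) ^ c j) * τ ^ (r / d * d : ℝ)| < 1 := by
    rw [abs_mul, hlimit, div_mul_cancel₀ _ (by positivity), Real.rpow_natCast,
      abs_of_pos (by positivity), inv_mul_lt_one₀ (pow_pos (hτ0.trans hτR) r)]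
    exact pow_lt_pow_left₀ hτR hτ0.le hr.ne'
  have hsummable (β : ℝ) : Summable fun k : ℕ ↦ |A k * τ ^ (r / d * k + β : ℝ)| :=
    ((hA_ratio.mul (.rpow_linear hτ0 d (r / d) β)).summable hd hlimit_lt).abs
  constructor
  · refine (hsummable 0).congr fun k ↦ ?_
    rw [abs_mul, abs_of_pos (Real.rpow_pos_of_pos hτ0 _)]
    ring_nf
  · refine (hsummable (r * lam)).congr fun k ↦ ?_
    ring_nf

end GammaQuotient

/-- Setup: `N ≥ 1`, positive integers `c₁,…,c_N` and `d` with `c_j ∣ d`,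
`r = Σ c_j − d > 0`, nonnegative rationals `a^j`, and a positive irrational real `λ`.  With
`A_{k₀} = [1/(Γ(1+r(k₀/d+λ))·k₀!)]·∏_j Γ(1−c_jλ−⟨k₀q_j+a^j⟩)/Γ(1−c_jλ−k₀q_j−a^j)` and
`R = (r^r·d^d·∏_j c_j^{−c_j})^{1/r}`, for every `0 < τ < R` the series
`Σ_{k₀≥0} |A_{k₀}|·τ^{r·k₀/d}` converges; in particular the regularized `I`-function
`I^{reg}(τ) = Σ_{k₀} A_{k₀} τ^{r(k₀/d+λ)}` converges absolutely on `(0, R)`. -/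
theorem stmt_9 (N : ℕ) (hN : 1 ≤ N) (c : Fin N → ℕ) (d r : ℕ)
    (hc : ∀ j, 0 < c j) (hd : 0 < d) (hdvd : ∀ j, c j ∣ d)
    (hr : 0 < r) (hrsum : (∑ j, c j) = d + r)
    (a : Fin N → ℚ) (ha : ∀ j, 0 ≤ a j)
    (lam : ℝ) (hpos : 0 < lam) (hirr : Irrational lam)
    (A : ℕ → ℝ)
    (hA : ∀ k₀ : ℕ, A k₀ =
      (1 / (Real.Gamma (1 + (r : ℝ) * ((k₀ : ℝ) / (d : ℝ) + lam)) * (k₀.factorial : ℝ))) *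
        ∏ j, Real.Gamma (1 - (c j : ℝ) * lam -
              Int.fract ((k₀ : ℝ) * ((c j : ℝ) / (d : ℝ)) + (a j : ℝ))) /
          Real.Gamma (1 - (c j : ℝ) * lam - (k₀ : ℝ) * ((c j : ℝ) / (d : ℝ)) - (a j : ℝ)))
    (R : ℝ)
    (hR : R = ((r : ℝ) ^ (r : ℝ) * (d : ℝ) ^ (d : ℝ) *
      ∏ j, (c j : ℝ) ^ (-(c j : ℝ))) ^ ((1 : ℝ) / (r : ℝ)))
    (τ : ℝ) (hτ0 : 0 < τ) (hτR : τ < R) :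
    Summable (fun k₀ : ℕ => |A k₀| * τ ^ ((r : ℝ) * (k₀ : ℝ) / (d : ℝ))) ∧
    Summable (fun k₀ : ℕ => |A k₀ * τ ^ ((r : ℝ) * ((k₀ : ℝ) / (d : ℝ) + lam))|) := by
  exact stmt_9_general c d r hd hr hrsum (fun j ↦ a j) lam _ (fun j ↦
    (periodic_fract_natCast_mul_div hd (c j) (a j)).comp fun x ↦
      Real.Gamma (1 - (c j : ℝ) * lam - x)) A hA R hR τ hτ0 hτR
end

section
/- Set n = c₁+⋯+c_N. Let g : (0,∞) → C be n-times continuously differentiable such that: (i) g satisfies the regularized Picard–Fuchs equation τ^r · [∏_{j=1}^N ∏_{l=0}^{c_j−1}(−(c_j/r)·θ − l − a^j)] g(τ) = [∏_{l=0}^{d−1}((d/r)·θ − dλ − l)] ∘ [∏_{l=0}^{r−1}(θ − l)] g(τ) for all τ > 0; (ii) g^{(j)}(τ) → 0 as τ → 0⁺ for every 0 ≤ j ≤ n; (iii) there exist constants C, p with |g^{(j)}(τ)| ≤ C(1+τ)^p for all τ > 0 and 0 ≤ j ≤ n. Then F(u) := u·∫₀^∞ e^{−uτ} g(τ) dτ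 is well defined and infinitely differentiable on (0,∞), and satisfies [∏_{j=1}^N ∏_{l=0}^{c_j−1}((c_j/r)·θ_u − l − a^j)] F(u) = u^r · [∏_{l=0}^{d−1}(−(d/r)·θ_u − dλ − l)] F(u) for all u > 0, where θ (resp. θ_u) is the Euler operator τ·d/dτ (resp. u·d/du). -/
open MeasureTheory

/-- The Euler operator `θ f (τ) = τ · f′(τ)` acting on complex-valued functions of a real
variable. -/
noncomputable def eulerOpC (f : ℝ → ℂ) : ℝ → ℂ := fun τ => (τ : ℂ) * deriv f τ

/-- The composition, over a list of pairs `(α, β)`, of the commuting first-order operators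
`α·θ + β` (the head of the list acting outermost). -/
noncomputable def opProdC (L : List (ℂ × ℂ)) (f : ℝ → ℂ) : ℝ → ℂ :=
  L.foldr (fun p g τ => p.1 * eulerOpC g τ + p.2 * g τ) f

/-!
Write `𝓒 h (u) = u ∫₀^∞ e^{-uτ} h(τ) dτ`. Differentiation under the integral sign and integration
by parts give `θ_u 𝓒 h = -𝓒 (θ h)`, without any condition at `0`, because the boundary term is that
of `τ h(τ)`; if moreover `h` vanishes at `0⁺`, then `𝓒 (∂ h) = u 𝓒 h`.

Since `∏_{l<r} (θ - l) = τ^r ∂^r` and `P(θ) τ^r = τ^r P(θ + r)`, an equation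
`τ^r A(θ) g = P(θ) ∏_{l<r} (θ - l) g` amounts to `A(θ) g = P(θ + r) ∂^r g`. Applying `𝓒` turns it
into `A(-θ_u) 𝓒 g = P(-θ_u + r) (u^r 𝓒 g) = u^r P(-θ_u) 𝓒 g`.
-/

open Set Filter Topology
open scoped ContDiff

section EulerCalculus

/-- The factors of `P(θ + c)`, where `L` lists the factors `α·θ + β` of `P(θ)`. -/
def shiftEuler (c : ℂ) (L : List (ℂ × ℂ)) : List (ℂ × ℂ) :=
  L.map fun p => (p.1, p.2 + c * p.1)

/-- The factors of `P(-θ)`, where `L` lists the factors `α·θ + β` of `P(θ)`. -/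
def negEuler (L : List (ℂ × ℂ)) : List (ℂ × ℂ) :=
  L.map fun p => (-p.1, p.2)

/-- The factors `θ - l`, `l < r`, of the falling factorial of `θ`. -/
def fallingEuler (r : ℕ) : List (ℂ × ℂ) :=
  (List.range r).map fun l : ℕ => (1, -(l : ℂ))

lemma shiftEuler_negEuler_shiftEuler (c : ℂ) (L : List (ℂ × ℂ)) :
    shiftEuler c (negEuler (shiftEuler c L)) = negEuler L := by
  simp [shiftEuler, negEuler, Function.comp_def]

lemma opProdC_append (L M : List (ℂ × ℂ)) (f : ℝ → ℂ) :
    opProdC (L ++ M) f = opProdC L (opProdC M f) :=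
  List.foldr_append

lemma opProdC_cons (p : ℂ × ℂ) (L : List (ℂ × ℂ)) (f : ℝ → ℂ) :
    opProdC (p :: L) f = opProdC [p] (opProdC L f) :=
  rfl

lemma opProdC_singleton_apply (p : ℂ × ℂ) (f : ℝ → ℂ) (t : ℝ) :
    opProdC [p] f t = p.1 * (t * deriv f t) + p.2 * f t :=
  rfl

variable {s : Set ℝ} {f h : ℝ → ℂ} {L : List (ℂ × ℂ)}

lemma differentiableAt_of_contDiffOn_succ {k : ℕ} (hs : IsOpen s) (hf : ContDiffOn ℝ (k + 1) f s)
    {t : ℝ} (ht : t ∈ s) : DifferentiableAt ℝ f t :=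
  (hf.differentiableOn (by simp)).differentiableAt (hs.mem_nhds ht)

lemma eqOn_opProdC (hs : IsOpen s) (hfh : EqOn f h s) :
    EqOn (opProdC L f) (opProdC L h) s := by
  induction L with
  | nil => exact hfh
  | cons p L ih =>
    intro t ht
    simp only [opProdC_cons p L, opProdC_singleton_apply, ih.deriv hs ht, ih ht]

lemma contDiffOn_opProdC (hs : IsOpen s) {k : ℕ} (hf : ContDiffOn ℝ (k + L.length : ℕ) f s) :
    ContDiffOn ℝ k (opProdC L f) s := by
  induction L generalizing k with
  | nil => exact hf
  | cons p L ih =>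
    have hLf : ContDiffOn ℝ (k + 1 : ℕ) (opProdC L f) s := ih <| hf.of_le <| by
      rw [List.length_cons]; exact_mod_cast (by omega : k + 1 + L.length ≤ k + (L.length + 1))
    have hderiv : ContDiffOn ℝ k (deriv (opProdC L f)) s :=
      hLf.deriv_of_isOpen hs (by push_cast; rfl)
    have hid : ContDiffOn ℝ k (fun t : ℝ => (t : ℂ)) s := Complex.ofRealCLM.contDiff.contDiffOn
    exact (contDiffOn_const.mul (hid.mul hderiv)).add
      (contDiffOn_const.mul (hLf.of_le (by exact_mod_cast Nat.le_succ k)))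

lemma contDiffOn_iteratedDeriv (hs : IsOpen s) {k r : ℕ} (hf : ContDiffOn ℝ (k + r : ℕ) f s) :
    ContDiffOn ℝ k (iteratedDeriv r f) s := by
  induction r generalizing f with
  | zero => simpa using hf
  | succ r ih =>
    rw [iteratedDeriv_succ']
    exact ih (hf.deriv_of_isOpen hs (by push_cast; rw [add_assoc]))

lemma hasDerivAt_ofReal_mul {t : ℝ} (hf : DifferentiableAt ℝ f t) :
    HasDerivAt (fun x : ℝ => (x : ℂ) * f x) (f t + t * deriv f t) t :=
  ((hasDerivAt_id t).ofReal_comp.mul hf.hasDerivAt).congr_deriv (by simp)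

lemma deriv_opProdC_singleton (hs : IsOpen s) (hf : ContDiffOn ℝ 2 f s) (p : ℂ × ℂ) :
    EqOn (deriv (opProdC [p] f)) (opProdC [(p.1, p.2 + p.1)] (deriv f)) s := by
  intro t ht
  have hf' : DifferentiableAt ℝ f t := differentiableAt_of_contDiffOn_succ (k := 1) hs hf ht
  have hdf : DifferentiableAt ℝ (deriv f) t :=
    differentiableAt_of_contDiffOn_succ (k := 0) hs
      (hf.deriv_of_isOpen hs (by norm_num [one_add_one_eq_two])) ht
  have hderiv := ((hasDerivAt_ofReal_mul hdf).const_mul p.1).add (hf'.hasDerivAt.const_mul p.2)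
  rw [opProdC_singleton_apply]
  refine hderiv.deriv.trans ?_
  ring

lemma opProdC_pow_mul (hs : IsOpen s) (r : ℕ) (hf : ContDiffOn ℝ L.length f s) :
    EqOn (opProdC L fun t => (t : ℂ) ^ r * f t)
      (fun t => (t : ℂ) ^ r * opProdC (shiftEuler r L) f t) s := by
  induction L with
  | nil => exact fun t _ => rfl
  | cons p L ih =>
    intro t ht
    have hLf := ih (hf.of_le (by exact_mod_cast Nat.le_succ L.length))
    have hdiff : DifferentiableAt ℝ (opProdC (shiftEuler r L) f) t :=
      differentiableAt_of_contDiffOn_succ (k := 0) hs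
        (contDiffOn_opProdC (k := 1) hs (hf.of_le (by simp [shiftEuler, add_comm]))) ht
    have hpow : HasDerivAt (fun x : ℝ => (x : ℂ) ^ r) (r * (t : ℂ) ^ (r - 1)) t :=
      ((hasDerivAt_id t).ofReal_comp.pow r).congr_deriv (by simp)
    have hpow_pred : (t : ℂ) * (r * (t : ℂ) ^ (r - 1)) = r * (t : ℂ) ^ r := by
      cases r with
      | zero => simp
      | succ r => rw [Nat.add_sub_cancel]; ring
    change _ = (t : ℂ) ^ r * opProdC [(p.1, p.2 + r * p.1)] (opProdC (shiftEuler r L) f) t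
    rw [opProdC_cons, opProdC_singleton_apply, opProdC_singleton_apply, hLf.deriv hs ht, hLf ht,
      (hpow.fun_mul hdiff.hasDerivAt).deriv]
    linear_combination p.1 * opProdC (shiftEuler r L) f t * hpow_pred

lemma iteratedDeriv_opProdC_sub_natCast (hs : IsOpen s) {r : ℕ}
    (hf : ContDiffOn ℝ (r + 1) f s) :
    EqOn (iteratedDeriv r (opProdC [(1, -(r : ℂ))] f))
      (fun t => t * iteratedDeriv (r + 1) f t) s := by
  induction r generalizing f with
  | zero => intro t _; simp [opProdC_singleton_apply]
  | succ r ih =>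
    intro t ht
    -- `∂ (θ - (r + 1)) = (θ - r) ∂`
    have hcomm : EqOn (deriv (opProdC [(1, -((r + 1 : ℕ) : ℂ))] f))
        (opProdC [(1, -(r : ℂ))] (deriv f)) s := by
      convert deriv_opProdC_singleton hs (hf.of_le ?_) (1, -((r + 1 : ℕ) : ℂ)) using 4
      · push_cast; ring
      · exact_mod_cast (by omega : 2 ≤ r + 1 + 1)
    have hf' : ContDiffOn ℝ (r + 1) (deriv f) s := hf.deriv_of_isOpen hs (by push_cast; rfl)
    rw [iteratedDeriv_succ', hcomm.iteratedDeriv_of_isOpen hs r ht, ih hf' ht,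
      iteratedDeriv_succ' (n := r + 1)]

lemma opProdC_fallingEuler (hs : IsOpen s) {r : ℕ} (hf : ContDiffOn ℝ r f s) :
    EqOn (opProdC (fallingEuler r) f) (fun t => (t : ℂ) ^ r * iteratedDeriv r f t) s := by
  induction r generalizing f with
  | zero => intro t _; simp [fallingEuler, opProdC]
  | succ r ih =>
    intro t ht
    have hsplit : fallingEuler (r + 1) = fallingEuler r ++ [(1, -(r : ℂ))] := by
      simp [fallingEuler, List.range_succ]
    have hf_factor : ContDiffOn ℝ r (opProdC [(1, -(r : ℂ))] f) s := contDiffOn_opProdC hs hf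
    rw [hsplit, opProdC_append, ih hf_factor ht]
    beta_reduce
    rw [iteratedDeriv_opProdC_sub_natCast hs (by exact_mod_cast hf) ht]
    ring

lemma opProdC_eq_opProdC_iteratedDeriv (hs : IsOpen s) (h0 : (0 : ℝ) ∉ s) {r : ℕ}
    {M : List (ℂ × ℂ)} (hf : ContDiffOn ℝ (M.length + r : ℕ) f s)
    (hode : ∀ t ∈ s, (t : ℂ) ^ r * opProdC L f t = opProdC M (opProdC (fallingEuler r) f) t) :
    EqOn (opProdC L f) (opProdC (shiftEuler r M) (iteratedDeriv r f)) s := by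
  intro t ht
  have hfr : ContDiffOn ℝ r f s := hf.of_le (by exact_mod_cast Nat.le_add_left r M.length)
  have hderiv : ContDiffOn ℝ M.length (iteratedDeriv r f) s := contDiffOn_iteratedDeriv hs hf
  have hode_t := hode t ht
  rw [eqOn_opProdC hs (opProdC_fallingEuler hs hfr) ht, opProdC_pow_mul hs r hderiv ht] at hode_t
  have ht0 : (t : ℂ) ≠ 0 := by exact_mod_cast ne_of_mem_of_not_mem ht h0
  exact mul_left_cancel₀ (pow_ne_zero r ht0) hode_t

end EulerCalculus

section ExponentialType

/-- `h` is of exponential type at most `σ` on `(0, ∞)`: it is `O(e^{bτ})` there for every `b > σ`.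
The bound is uniform down to `0`, so that `h` is also bounded near `0`. -/
def HasExpType (σ : ℝ) (h : ℝ → ℂ) : Prop :=
  ∀ b > σ, ∃ C : ℝ, ∀ τ > 0, ‖h τ‖ ≤ C * Real.exp (b * τ)

variable {σ : ℝ} {f h : ℝ → ℂ}

namespace HasExpType

lemma of_norm_le_mul {D : ℝ} (hf : HasExpType σ f) (hle : ∀ τ > 0, ‖h τ‖ ≤ D * ‖f τ‖) :
    HasExpType σ h := by
  intro b hb
  obtain ⟨C, hC⟩ := hf b hb
  refine ⟨|D| * C, fun τ hτ => ?_⟩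
  calc ‖h τ‖ ≤ D * ‖f τ‖ := hle τ hτ
    _ ≤ |D| * (C * Real.exp (b * τ)) := by
        gcongr
        · exact le_abs_self D
        · exact hC τ hτ
    _ = |D| * C * Real.exp (b * τ) := by ring

lemma congr (hf : HasExpType σ f) (hhf : EqOn h f (Ioi 0)) : HasExpType σ h :=
  hf.of_norm_le_mul (D := 1) fun τ hτ => by rw [one_mul, hhf hτ]

lemma const_mul (hf : HasExpType σ f) (c : ℂ) : HasExpType σ (fun τ => c * f τ) :=
  hf.of_norm_le_mul fun τ _ => (norm_mul c (f τ)).le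

lemma add (hf : HasExpType σ f) (hh : HasExpType σ h) : HasExpType σ (fun τ => f τ + h τ) := by
  intro b hb
  obtain ⟨C, hC⟩ := hf b hb
  obtain ⟨D, hD⟩ := hh b hb
  refine ⟨C + D, fun τ hτ => (norm_add_le _ _).trans ?_⟩
  rw [add_mul]
  exact add_le_add (hC τ hτ) (hD τ hτ)

lemma ofReal_mul (hf : HasExpType σ f) : HasExpType σ (fun τ => τ * f τ) := by
  intro b hb
  obtain ⟨b', hσb', hb'b⟩ := exists_between hb
  have hε : 0 < b - b' := sub_pos.2 hb'b
  obtain ⟨C, hC⟩ := hf b' hσb'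
  refine ⟨(b - b')⁻¹ * C, fun τ hτ => ?_⟩
  have hτ_le : τ ≤ (b - b')⁻¹ * Real.exp ((b - b') * τ) := by
    rw [← div_eq_inv_mul, le_div_iff₀ hε, mul_comm]
    linarith [Real.add_one_le_exp ((b - b') * τ)]
  calc ‖(τ : ℂ) * f τ‖ = τ * ‖f τ‖ := by
        rw [norm_mul, Complex.norm_real, Real.norm_of_nonneg hτ.le]
    _ ≤ ((b - b')⁻¹ * Real.exp ((b - b') * τ)) * (C * Real.exp (b' * τ)) := by
        gcongr
        exact hC τ hτ
    _ = (b - b')⁻¹ * C * (Real.exp ((b - b') * τ) * Real.exp (b' * τ)) := by ring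
    _ = (b - b')⁻¹ * C * Real.exp (b * τ) := by rw [← Real.exp_add]; ring_nf

lemma tendsto_ofReal_mul_zero (hf : HasExpType σ f) :
    Tendsto (fun τ : ℝ => (τ : ℂ) * f τ) (𝓝[>] 0) (𝓝 0) := by
  obtain ⟨b, hb⟩ := exists_gt σ
  obtain ⟨C, hC⟩ := hf b hb
  have hbound : Tendsto (fun τ : ℝ => τ * (C * Real.exp (b * τ))) (𝓝[>] 0) (𝓝 0) := by
    have hcont : Continuous fun τ : ℝ => τ * (C * Real.exp (b * τ)) := by fun_prop
    simpa using (hcont.tendsto 0).mono_left nhdsWithin_le_nhds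
  refine squeeze_zero_norm' ?_ hbound
  filter_upwards [self_mem_nhdsWithin] with τ (hτ : 0 < τ)
  rw [norm_mul, Complex.norm_real, Real.norm_of_nonneg hτ.le]
  exact mul_le_mul_of_nonneg_left (hC τ hτ) hτ.le

lemma one_add_pow (m : ℕ) : HasExpType 0 (fun τ => (1 + τ : ℂ) ^ m) := by
  induction m with
  | zero =>
    refine fun b hb => ⟨1, fun τ hτ => ?_⟩
    simpa using (mul_pos hb hτ).le
  | succ m ih => exact (ih.add ih.ofReal_mul).congr fun τ _ => by ring

lemma of_norm_le_rpow {C p : ℝ} (hle : ∀ τ > 0, ‖h τ‖ ≤ C * (1 + τ) ^ p) : HasExpType 0 h := by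
  obtain ⟨m, hm⟩ := exists_nat_ge p
  refine (one_add_pow m).of_norm_le_mul (D := |C|) fun τ hτ => ?_
  have hnorm : ‖(1 + τ : ℂ) ^ m‖ = (1 + τ) ^ (m : ℝ) := by
    rw [norm_pow, Real.rpow_natCast, ← Complex.ofReal_one, ← Complex.ofReal_add,
      Complex.norm_real, Real.norm_of_nonneg (by positivity)]
  rw [hnorm]
  refine (hle τ hτ).trans ?_
  gcongr
  · exact le_abs_self C
  · linarith

end HasExpType

/-- `h` is `k` times continuously differentiable on `(0, ∞)`, and its derivatives of order at most
`k` are of exponential type at most `σ`. -/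
structure HasExpTypeDerivs (σ : ℝ) (k : ℕ) (h : ℝ → ℂ) : Prop where
  contDiffOn : ContDiffOn ℝ k h (Ioi 0)
  hasExpType_iteratedDeriv : ∀ j ≤ k, HasExpType σ (iteratedDeriv j h)

namespace HasExpTypeDerivs

variable {k m r : ℕ} {L : List (ℂ × ℂ)}

lemma of_norm_le_rpow {C p : ℝ} (hC : ContDiffOn ℝ k h (Ioi 0))
    (hle : ∀ τ : ℝ, 0 < τ → ∀ j ≤ k, ‖_root_.iteratedDeriv j h τ‖ ≤ C * (1 + τ) ^ p) :
    HasExpTypeDerivs 0 k h :=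
  ⟨hC, fun j hj => HasExpType.of_norm_le_rpow fun τ hτ => hle τ hτ j hj⟩

lemma hasExpType (hh : HasExpTypeDerivs σ k h) : HasExpType σ h := by
  simpa using hh.hasExpType_iteratedDeriv 0 k.zero_le

lemma aestronglyMeasurable (hh : HasExpTypeDerivs σ k h) :
    AEStronglyMeasurable h (volume.restrict (Ioi 0)) :=
  hh.contDiffOn.continuousOn.aestronglyMeasurable measurableSet_Ioi

lemma mono (hh : HasExpTypeDerivs σ k h) (hmk : m ≤ k) : HasExpTypeDerivs σ m h :=
  ⟨hh.contDiffOn.of_le (by exact_mod_cast hmk),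
    fun j hj => hh.hasExpType_iteratedDeriv j (hj.trans hmk)⟩

lemma deriv (hh : HasExpTypeDerivs σ (k + 1) h) : HasExpTypeDerivs σ k (deriv h) :=
  ⟨hh.contDiffOn.deriv_of_isOpen isOpen_Ioi (by push_cast; rfl), fun j hj => by
    rw [← iteratedDeriv_succ']
    exact hh.hasExpType_iteratedDeriv (j + 1) (by omega)⟩

lemma iteratedDeriv (hh : HasExpTypeDerivs σ (k + r) h) :
    HasExpTypeDerivs σ k (iteratedDeriv r h) := by
  induction r generalizing h with
  | zero => simpa using hh
  | succ r ih =>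
    rw [iteratedDeriv_succ']
    exact ih hh.deriv

lemma hasExpType_iteratedDeriv_opProdC_singleton (p : ℂ × ℂ) (hh : HasExpTypeDerivs σ (k + 1) h) :
    HasExpType σ (_root_.iteratedDeriv k (opProdC [p] h)) := by
  induction k generalizing p h with
  | zero =>
    rw [iteratedDeriv_zero]
    exact (hh.deriv.hasExpType.ofReal_mul.const_mul p.1).add (hh.hasExpType.const_mul p.2)
  | succ k ih =>
    have hC2 : ContDiffOn ℝ 2 h (Ioi 0) :=
      hh.contDiffOn.of_le (by exact_mod_cast (by omega : 2 ≤ k + 1 + 1))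
    rw [iteratedDeriv_succ']
    exact (ih _ hh.deriv).congr
      ((deriv_opProdC_singleton isOpen_Ioi hC2 p).iteratedDeriv_of_isOpen isOpen_Ioi k)

lemma opProdC (hh : HasExpTypeDerivs σ (k + L.length) h) :
    HasExpTypeDerivs σ k (opProdC L h) := by
  induction L generalizing k with
  | nil => exact hh
  | cons p L ih =>
    have hL : HasExpTypeDerivs σ (k + 1) (_root_.opProdC L h) :=
      ih (hh.mono (by rw [List.length_cons]; omega))
    exact ⟨contDiffOn_opProdC (L := [p]) isOpen_Ioi hL.contDiffOn, fun j hj =>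
      hasExpType_iteratedDeriv_opProdC_singleton p (hL.mono (by omega))⟩

lemma eulerOpC (hh : HasExpTypeDerivs σ (k + 1) h) : HasExpTypeDerivs σ k (eulerOpC h) := by
  have hθ : _root_.opProdC [(1, 0)] h = _root_.eulerOpC h := by ext τ; simp [_root_.opProdC]
  rw [← hθ]
  exact hh.opProdC (L := [(1, 0)])

end HasExpTypeDerivs

end ExponentialType

section LaplaceCarson

/-- The Laplace transform `∫₀^∞ e^{-uτ} h(τ) dτ` at real `u`. -/
noncomputable def laplace (h : ℝ → ℂ) (u : ℝ) : ℂ :=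
  ∫ τ in Ioi (0 : ℝ), Complex.exp (-(u : ℂ) * (τ : ℂ)) * h τ

/-- The Laplace–Carson transform `u ∫₀^∞ e^{-uτ} h(τ) dτ` at real `u`. -/
noncomputable def laplaceCarson (h : ℝ → ℂ) (u : ℝ) : ℂ :=
  u * laplace h u

variable {σ u : ℝ} {f h : ℝ → ℂ} {L : List (ℂ × ℂ)}

lemma norm_exp_neg_mul_mul (h : ℝ → ℂ) (u τ : ℝ) :
    ‖Complex.exp (-(u : ℂ) * (τ : ℂ)) * h τ‖ = Real.exp (-u * τ) * ‖h τ‖ := by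
  rw [norm_mul, Complex.norm_exp]
  simp

lemma hasDerivAt_exp_neg_mul (u τ : ℝ) :
    HasDerivAt (fun τ : ℝ => Complex.exp (-(u : ℂ) * (τ : ℂ)))
      (-(u : ℂ) * Complex.exp (-(u : ℂ) * (τ : ℂ))) τ :=
  ((hasDerivAt_id τ).ofReal_comp.const_mul (-(u : ℂ))).cexp.congr_deriv (by simp [mul_comm])

lemma aestronglyMeasurable_exp_neg_mul_mul (hm : AEStronglyMeasurable h (volume.restrict (Ioi 0)))
    (u : ℝ) :
    AEStronglyMeasurable (fun τ : ℝ => Complex.exp (-(u : ℂ) * (τ : ℂ)) * h τ)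
      (volume.restrict (Ioi 0)) := by
  have hexp : Continuous fun τ : ℝ => Complex.exp (-(u : ℂ) * (τ : ℂ)) := by fun_prop
  exact hexp.aestronglyMeasurable.mul hm

namespace HasExpType

lemma exists_norm_exp_neg_mul_mul_le (hh : HasExpType σ h) (hu : σ < u) :
    ∃ C, ∃ ε > 0, ∀ τ : ℝ, 0 < τ →
      ‖Complex.exp (-(u : ℂ) * (τ : ℂ)) * h τ‖ ≤ C * Real.exp (-ε * τ) := by
  obtain ⟨b, hσb, hbu⟩ := exists_between hu
  obtain ⟨C, hC⟩ := hh b hσb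
  refine ⟨C, u - b, sub_pos.2 hbu, fun τ hτ => ?_⟩
  calc ‖Complex.exp (-(u : ℂ) * (τ : ℂ)) * h τ‖ = Real.exp (-u * τ) * ‖h τ‖ :=
        norm_exp_neg_mul_mul h u τ
    _ ≤ Real.exp (-u * τ) * (C * Real.exp (b * τ)) := by
        gcongr
        exact hC τ hτ
    _ = C * (Real.exp (-u * τ) * Real.exp (b * τ)) := by ring
    _ = C * Real.exp (-(u - b) * τ) := by rw [← Real.exp_add]; ring_nf

lemma integrableOn_exp_neg_mul_mul (hh : HasExpType σ h)
    (hm : AEStronglyMeasurable h (volume.restrict (Ioi 0))) (hu : σ < u) :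
    IntegrableOn (fun τ : ℝ => Complex.exp (-(u : ℂ) * (τ : ℂ)) * h τ) (Ioi 0) := by
  obtain ⟨C, ε, hε, hC⟩ := hh.exists_norm_exp_neg_mul_mul_le hu
  refine ((exp_neg_integrableOn_Ioi 0 hε).const_mul C).mono'
    (aestronglyMeasurable_exp_neg_mul_mul hm u) ?_
  filter_upwards [ae_restrict_mem measurableSet_Ioi] with τ hτ using hC τ hτ

lemma tendsto_exp_neg_mul_mul_atTop (hh : HasExpType σ h) (hu : σ < u) :
    Tendsto (fun τ : ℝ => Complex.exp (-(u : ℂ) * (τ : ℂ)) * h τ) atTop (𝓝 0) := by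
  obtain ⟨C, ε, hε, hC⟩ := hh.exists_norm_exp_neg_mul_mul_le hu
  have hlin : Tendsto (fun τ : ℝ => -ε * τ) atTop atBot :=
    tendsto_id.const_mul_atTop_of_neg (neg_lt_zero.2 hε)
  have hbound : Tendsto (fun τ : ℝ => C * Real.exp (-ε * τ)) atTop (𝓝 0) := by
    rw [← mul_zero C]
    exact (Real.tendsto_exp_atBot.comp hlin).const_mul C
  refine squeeze_zero_norm' ?_ hbound
  filter_upwards [eventually_gt_atTop 0] with τ hτ using hC τ hτ

lemma hasDerivAt_laplace (hh : HasExpType σ h)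
    (hm : AEStronglyMeasurable h (volume.restrict (Ioi 0))) (hu : σ < u) :
    HasDerivAt (laplace h) (-laplace (fun τ => τ * h τ) u) u := by
  obtain ⟨v, hσv, hvu⟩ := exists_between hu
  have hm' : AEStronglyMeasurable (fun τ : ℝ => (τ : ℂ) * h τ) (volume.restrict (Ioi 0)) :=
    Complex.continuous_ofReal.aestronglyMeasurable.mul hm
  have hderiv := (hasDerivAt_integral_of_dominated_loc_of_deriv_le
    (F := fun (x τ : ℝ) => Complex.exp (-(x : ℂ) * (τ : ℂ)) * h τ)
    (F' := fun (x τ : ℝ) => -(Complex.exp (-(x : ℂ) * (τ : ℂ)) * ((τ : ℂ) * h τ)))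
    (bound := fun τ : ℝ => ‖Complex.exp (-(v : ℂ) * (τ : ℂ)) * ((τ : ℂ) * h τ)‖)
    (Ioi_mem_nhds hvu) (.of_forall fun x => aestronglyMeasurable_exp_neg_mul_mul hm x)
    (hh.integrableOn_exp_neg_mul_mul hm hu) (aestronglyMeasurable_exp_neg_mul_mul hm' u).neg
    ?_ (hh.ofReal_mul.integrableOn_exp_neg_mul_mul hm' hσv).norm ?_).2
  · rwa [integral_neg] at hderiv
  · filter_upwards [ae_restrict_mem measurableSet_Ioi] with τ (hτ : 0 < τ) x (hx : v < x)
    rw [norm_neg, norm_exp_neg_mul_mul fun τ => (τ : ℂ) * h τ,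
      norm_exp_neg_mul_mul fun τ => (τ : ℂ) * h τ]
    gcongr
  · refine .of_forall fun τ x _ => ?_
    have hexp := hasDerivAt_exp_neg_mul τ x
    simp only [neg_mul, mul_comm (τ : ℂ)] at hexp ⊢
    exact (hexp.mul_const (h τ)).congr_deriv (by ring)

lemma contDiffOn_laplace (hh : HasExpType σ h)
    (hm : AEStronglyMeasurable h (volume.restrict (Ioi 0))) :
    ContDiffOn ℝ ∞ (laplace h) (Ioi σ) := by
  refine contDiffOn_infty.2 fun m => ?_
  have hdiff {h : ℝ → ℂ} (hh : HasExpType σ h)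
      (hm : AEStronglyMeasurable h (volume.restrict (Ioi 0))) :
      DifferentiableOn ℝ (laplace h) (Ioi σ) := fun u hu =>
    (hh.hasDerivAt_laplace hm hu).differentiableAt.differentiableWithinAt
  induction m generalizing h with
  | zero => exact contDiffOn_zero.2 (hdiff hh hm).continuousOn
  | succ m ih =>
    push_cast
    refine (contDiffOn_succ_iff_deriv_of_isOpen isOpen_Ioi).2
      ⟨hdiff hh hm, fun hω => by simp at hω, ?_⟩
    exact (ih hh.ofReal_mul (Complex.continuous_ofReal.aestronglyMeasurable.mul hm)).neg.congr
      fun u hu => (hh.hasDerivAt_laplace hm hu).deriv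

end HasExpType

lemma contDiffOn_laplaceCarson (hh : HasExpType σ h)
    (hm : AEStronglyMeasurable h (volume.restrict (Ioi 0))) :
    ContDiffOn ℝ ∞ (laplaceCarson h) (Ioi σ) :=
  Complex.ofRealCLM.contDiff.contDiffOn.mul (hh.contDiffOn_laplace hm)

lemma laplace_congr (hfh : EqOn f h (Ioi 0)) : laplace f = laplace h := by
  ext u
  refine setIntegral_congr_fun measurableSet_Ioi fun τ hτ => ?_
  rw [hfh hτ]

lemma laplace_const_mul (c : ℂ) : laplace (fun τ => c * f τ) u = c * laplace f u := by
  simp only [laplace, mul_left_comm _ c, integral_const_mul]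

lemma laplace_add (hf : HasExpType σ f) (hfm : AEStronglyMeasurable f (volume.restrict (Ioi 0)))
    (hh : HasExpType σ h) (hhm : AEStronglyMeasurable h (volume.restrict (Ioi 0))) (hu : σ < u) :
    laplace (fun τ => f τ + h τ) u = laplace f u + laplace h u := by
  simp only [laplace, mul_add]
  exact integral_add (hf.integrableOn_exp_neg_mul_mul hfm hu)
    (hh.integrableOn_exp_neg_mul_mul hhm hu)

lemma laplace_deriv (hdiff : DifferentiableOn ℝ h (Ioi 0)) (hh : HasExpType σ h)
    (hh' : HasExpType σ (deriv h)) (h0 : Tendsto h (𝓝[>] 0) (𝓝 0)) (hu : σ < u) :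
    laplace (deriv h) u = u * laplace h u := by
  have hm : AEStronglyMeasurable h (volume.restrict (Ioi 0)) :=
    hdiff.continuousOn.aestronglyMeasurable measurableSet_Ioi
  have hexp0 : Tendsto (fun τ : ℝ => Complex.exp (-(u : ℂ) * (τ : ℂ))) (𝓝[>] 0) (𝓝 1) := by
    simpa using (hasDerivAt_exp_neg_mul u 0).continuousAt.tendsto.mono_left nhdsWithin_le_nhds
  have hint : IntegrableOn (fun τ : ℝ => -(u : ℂ) * Complex.exp (-(u : ℂ) * (τ : ℂ)) * h τ)
      (Ioi 0) := by
    simp only [mul_assoc]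
    exact (hh.integrableOn_exp_neg_mul_mul hm hu).const_mul (-(u : ℂ))
  have hboundary := hexp0.mul h0
  rw [mul_zero] at hboundary
  have hparts := integral_Ioi_mul_deriv_eq_deriv_mul
    (fun τ _ => hasDerivAt_exp_neg_mul u τ)
    (fun τ hτ => (hdiff.differentiableAt (Ioi_mem_nhds hτ)).hasDerivAt)
    (hh'.integrableOn_exp_neg_mul_mul (aestronglyMeasurable_deriv h _) hu) hint
    hboundary (hh.tendsto_exp_neg_mul_mul_atTop hu)
  unfold laplace
  rw [hparts, ← integral_const_mul, sub_zero, zero_sub, ← integral_neg]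
  congr 1 with τ
  ring

lemma laplaceCarson_iteratedDeriv {r : ℕ} (hh : HasExpTypeDerivs σ r h)
    (h0 : ∀ j < r, Tendsto (iteratedDeriv j h) (𝓝[>] 0) (𝓝 0)) (hu : σ < u) :
    laplaceCarson (iteratedDeriv r h) u = u ^ r * laplaceCarson h u := by
  induction r with
  | zero => simp
  | succ r ih =>
    have hr : HasExpTypeDerivs σ 1 (iteratedDeriv r h) :=
      HasExpTypeDerivs.iteratedDeriv (by rwa [add_comm])
    have hstep := laplace_deriv (hr.contDiffOn.differentiableOn (by simp)) hr.hasExpType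
      hr.deriv.hasExpType (h0 r r.lt_succ_self) hu
    have hrec := ih (hh.mono r.le_succ) fun j hj => h0 j (hj.trans r.lt_succ_self)
    rw [laplaceCarson, iteratedDeriv_succ, hstep, ← laplaceCarson, hrec]
    ring

lemma laplace_eulerOpC (hh : HasExpTypeDerivs σ 1 h) (hu : σ < u) :
    laplace (eulerOpC h) u = u * laplace (fun τ => τ * h τ) u - laplace h u := by
  have hderiv {τ : ℝ} (hτ : 0 < τ) :
      HasDerivAt (fun τ : ℝ => (τ : ℂ) * h τ) (h τ + eulerOpC h τ) τ :=
    hasDerivAt_ofReal_mul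
      (differentiableAt_of_contDiffOn_succ (k := 0) isOpen_Ioi (by simpa using hh.contDiffOn) hτ)
  have hderiv_eq : EqOn (deriv fun τ : ℝ => (τ : ℂ) * h τ) (fun τ => h τ + eulerOpC h τ) (Ioi 0) :=
    fun τ hτ => (hderiv hτ).deriv
  have hθ : HasExpTypeDerivs σ 0 (eulerOpC h) := hh.eulerOpC
  have hparts : laplace (deriv fun τ : ℝ => (τ : ℂ) * h τ) u
      = u * laplace (fun τ => τ * h τ) u :=
    laplace_deriv (fun τ hτ => (hderiv hτ).differentiableAt.differentiableWithinAt)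
      hh.hasExpType.ofReal_mul ((hh.hasExpType.add hθ.hasExpType).congr hderiv_eq)
      hh.hasExpType.tendsto_ofReal_mul_zero hu
  rw [← hparts, laplace_congr hderiv_eq, laplace_add hh.hasExpType hh.aestronglyMeasurable
    hθ.hasExpType hθ.aestronglyMeasurable hu, add_sub_cancel_left]

lemma eulerOpC_laplaceCarson (hh : HasExpTypeDerivs σ 1 h) (hu : σ < u) :
    eulerOpC (laplaceCarson h) u = -laplaceCarson (eulerOpC h) u := by
  have hL := hh.hasExpType.hasDerivAt_laplace hh.aestronglyMeasurable hu
  have hderiv : deriv (laplaceCarson h) u = laplace h u + u * deriv (laplace h) u :=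
    (hasDerivAt_ofReal_mul hL.differentiableAt).deriv
  rw [eulerOpC, hderiv, hL.deriv, laplaceCarson, laplace_eulerOpC hh hu]
  ring

lemma opProdC_negEuler_laplaceCarson (hh : HasExpTypeDerivs σ L.length h) :
    EqOn (opProdC (negEuler L) (laplaceCarson h)) (laplaceCarson (opProdC L h)) (Ioi σ) := by
  induction L with
  | nil => exact fun u _ => rfl
  | cons p L ih =>
    intro u hu
    have hLh : HasExpTypeDerivs σ 1 (opProdC L h) :=
      HasExpTypeDerivs.opProdC (by rwa [add_comm])
    have hθ : HasExpTypeDerivs σ 0 (eulerOpC (opProdC L h)) := hLh.eulerOpC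
    calc opProdC (negEuler (p :: L)) (laplaceCarson h) u
        = opProdC [(-p.1, p.2)] (opProdC (negEuler L) (laplaceCarson h)) u := rfl
      _ = opProdC [(-p.1, p.2)] (laplaceCarson (opProdC L h)) u :=
          eqOn_opProdC isOpen_Ioi (ih (hh.mono L.length.le_succ)) hu
      _ = -p.1 * eulerOpC (laplaceCarson (opProdC L h)) u
            + p.2 * laplaceCarson (opProdC L h) u := rfl
      _ = u * (p.1 * laplace (eulerOpC (opProdC L h)) u + p.2 * laplace (opProdC L h) u) := by
          rw [eulerOpC_laplaceCarson hLh hu, laplaceCarson, laplaceCarson]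
          ring
      _ = laplaceCarson (opProdC (p :: L) h) u := by
          rw [← laplace_const_mul, ← laplace_const_mul, ← laplace_add
            (hθ.hasExpType.const_mul p.1) (hθ.aestronglyMeasurable.const_mul p.1)
            (hLh.hasExpType.const_mul p.2) (hLh.aestronglyMeasurable.const_mul p.2) hu]
          rfl

end LaplaceCarson

lemma length_flatten_map_finRange {α : Type*} {N : ℕ} (c : Fin N → ℕ) (f : Fin N → ℕ → α) :
    ((List.finRange N).map fun j => (List.range (c j)).map (f j)).flatten.length = ∑ j, c j := by
  simp [List.length_flatten, Fin.sum_univ_def, Function.comp_def]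

theorem stmt_12_general {σ : ℝ} {n r : ℕ} {L M : List (ℂ × ℂ)} (hL : L.length ≤ n)
    (hM : M.length + r ≤ n) {g : ℝ → ℂ} (hg : HasExpTypeDerivs σ n g)
    (hg0 : ∀ j < r, Tendsto (iteratedDeriv j g) (𝓝[>] 0) (𝓝 0))
    (hode : ∀ τ : ℝ, 0 < τ →
      (τ : ℂ) ^ r * opProdC L g τ = opProdC M (opProdC (fallingEuler r) g) τ)
    {F : ℝ → ℂ}
    (hF : ∀ u : ℝ, σ < u →
      F u = u * ∫ τ in Ioi (0 : ℝ), Complex.exp (-(u : ℂ) * (τ : ℂ)) * g τ) :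
    (∀ u : ℝ, σ < u →
      IntegrableOn (fun τ : ℝ => Complex.exp (-(u : ℂ) * (τ : ℂ)) * g τ) (Ioi 0)) ∧
    ContDiffOn ℝ ∞ F (Ioi σ) ∧
    ∀ u : ℝ, σ < u → opProdC (negEuler L) F u = u ^ r * opProdC (negEuler M) F u := by
  have hF_eq : EqOn F (laplaceCarson g) (Ioi σ) := hF
  have hsmooth := contDiffOn_laplaceCarson hg.hasExpType hg.aestronglyMeasurable
  refine ⟨fun u hu => hg.hasExpType.integrableOn_exp_neg_mul_mul hg.aestronglyMeasurable hu,
    hsmooth.congr hF_eq, fun u hu => ?_⟩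
  have hgM : HasExpTypeDerivs σ (M.length + r) g := hg.mono hM
  have hgM' : HasExpTypeDerivs σ (shiftEuler r M).length (iteratedDeriv r g) := by
    simpa [shiftEuler] using hgM.iteratedDeriv
  have hLM : EqOn (opProdC L g) (opProdC (shiftEuler r M) (iteratedDeriv r g)) (Ioi 0) :=
    opProdC_eq_opProdC_iteratedDeriv isOpen_Ioi self_notMem_Ioi hgM.contDiffOn hode
  have hcarson : EqOn (laplaceCarson (iteratedDeriv r g)) (fun u => u ^ r * laplaceCarson g u)
      (Ioi σ) := fun u hu => laplaceCarson_iteratedDeriv (hg.mono (by omega)) hg0 hu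
  calc opProdC (negEuler L) F u
      = opProdC (negEuler L) (laplaceCarson g) u := eqOn_opProdC isOpen_Ioi hF_eq hu
    _ = laplaceCarson (opProdC L g) u := opProdC_negEuler_laplaceCarson (hg.mono hL) hu
    _ = laplaceCarson (opProdC (shiftEuler r M) (iteratedDeriv r g)) u := by
        rw [laplaceCarson, laplace_congr hLM, ← laplaceCarson]
    _ = opProdC (negEuler (shiftEuler r M)) (laplaceCarson (iteratedDeriv r g)) u :=
        (opProdC_negEuler_laplaceCarson hgM' hu).symm
    _ = opProdC (negEuler (shiftEuler r M)) (fun u => u ^ r * laplaceCarson g u) u :=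
        eqOn_opProdC isOpen_Ioi hcarson hu
    _ = u ^ r * opProdC (negEuler M) (laplaceCarson g) u := by
        rw [← shiftEuler_negEuler_shiftEuler r M]
        exact opProdC_pow_mul isOpen_Ioi r
          (hsmooth.of_le (by exact_mod_cast le_top)) hu
    _ = u ^ r * opProdC (negEuler M) F u := by
        rw [eqOn_opProdC isOpen_Ioi hF_eq hu]

/-- Lemma 5.6, Equation (5.6), of the paper.  Setup: `N ≥ 1`, positive
integers `c_j ∣ d`, `r = Σ c_j − d > 0`, nonnegative rationals `a^j`, complex `λ`,
`n = Σ c_j`.  If `g : (0,∞) → ℂ` is `n`-times continuously differentiable, satisfies the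
regularized Picard–Fuchs equation
`τ^r·[∏_j ∏_{l<c_j}(−(c_j/r)θ − l − a^j)] g = [∏_{l<d}((d/r)θ − dλ − l)]∘[∏_{l<r}(θ − l)] g`,
has `g^{(j)} → 0` as `τ → 0⁺` for `j ≤ n`, and all `g^{(j)}` of polynomial growth, then
`F(u) = u·∫₀^∞ e^{−uτ} g(τ) dτ` is well defined and smooth on `(0,∞)` and satisfies
`[∏_j ∏_{l<c_j}((c_j/r)θ_u − l − a^j)] F = u^r·[∏_{l<d}(−(d/r)θ_u − dλ − l)] F`. -/
theorem stmt_12 (N : ℕ) (hN : 1 ≤ N) (c : Fin N → ℕ) (d r : ℕ)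
    (hc : ∀ j, 0 < c j) (hd : 0 < d) (hdvd : ∀ j, c j ∣ d)
    (hr : 0 < r) (hrsum : (∑ j, c j) = d + r)
    (a : Fin N → ℚ) (ha : ∀ j, 0 ≤ a j)
    (lam : ℂ) (n : ℕ) (hn : n = ∑ j, c j)
    (g : ℝ → ℂ)
    (hg_smooth : ContDiffOn ℝ (n : ℕ∞) g (Set.Ioi 0))
    (hode : ∀ τ : ℝ, 0 < τ →
      (τ : ℂ) ^ (r : ℕ) *
        opProdC (((List.finRange N).map (fun j => (List.range (c j)).map
            (fun l => (-(c j : ℂ) / (r : ℂ), -(l : ℂ) - (a j : ℂ))))).flatten) g τ =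
      opProdC ((List.range d).map (fun l => ((d : ℂ) / (r : ℂ), -(d : ℂ) * lam - (l : ℂ))))
        (opProdC ((List.range r).map (fun l => ((1 : ℂ), -(l : ℂ)))) g) τ)
    (hg0 : ∀ j ≤ n, Filter.Tendsto (deriv^[j] g) (nhdsWithin 0 (Set.Ioi 0)) (nhds 0))
    (hpoly : ∃ C p : ℝ, ∀ τ : ℝ, 0 < τ → ∀ j ≤ n, ‖deriv^[j] g τ‖ ≤ C * (1 + τ) ^ p)
    (F : ℝ → ℂ)
    (hF : ∀ u : ℝ, 0 < u →
      F u = (u : ℂ) * ∫ τ in Set.Ioi (0 : ℝ), Complex.exp (-(u : ℂ) * (τ : ℂ)) * g τ) :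
    (∀ u : ℝ, 0 < u →
      IntegrableOn (fun τ : ℝ => Complex.exp (-(u : ℂ) * (τ : ℂ)) * g τ) (Set.Ioi 0)) ∧
    ContDiffOn ℝ (⊤ : ℕ∞) F (Set.Ioi 0) ∧
    ∀ u : ℝ, 0 < u →
      opProdC (((List.finRange N).map (fun j => (List.range (c j)).map
          (fun l => ((c j : ℂ) / (r : ℂ), -(l : ℂ) - (a j : ℂ))))).flatten) F u =
        (u : ℂ) ^ (r : ℕ) *
          opProdC ((List.range d).map
            (fun l => (-(d : ℂ) / (r : ℂ), -(d : ℂ) * lam - (l : ℂ)))) F u := by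
  -- In `(List.range k).map fun l => … (l : ℂ) …` the elaborator coerces the list itself to
  -- `List ℂ` through the list monad; this moves the coercion back onto `l`.
  simp only [bind_pure_comp, List.map_eq_map, List.map_map, Function.comp_def] at hode ⊢
  simp only [← iteratedDeriv_eq_iterate] at hg0 hpoly
  obtain ⟨C, p, hgrowth⟩ := hpoly
  obtain ⟨hint, hsmooth, hpf⟩ := stmt_12_general
    (by rw [length_flatten_map_finRange, hn]) (by simp [hn, hrsum])
    (HasExpTypeDerivs.of_norm_le_rpow hg_smooth hgrowth) (fun j _ => hg0 j (by omega)) hode hF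
  refine ⟨hint, hsmooth, fun u hu => ?_⟩
  simpa [negEuler, List.map_flatten, Function.comp_def, neg_div] using hpf u hu
end
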